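/- arXiv:1302.4219 — 2 statements merged into one kernel-verified Lean document; each statement's English description precedes it below -/
import Mathlib

section
/- Every non-star tree T on at least 4 vertices admits an embedding into its complement such that the image is contained in T^6: there exists a fixed-point-free permutation σ of V(T) with σ*(E(T)) ∩ E(T) = ∅ and dist_T(σ(u),σ(v)) ≤ 6 for every edge uv of T. -/
open SimpleGraph

/-- A non-star tree: a tree in which no vertex is adjacent to all other vertices. -/
def IsNonStarTree {V : Type*} (G : SimpleGraph V) : Prop :=
  G.IsTree ∧ ¬ ∃ v, ∀ w, w ≠ v → G.Adj v w

lemma tree_parent_unique {V : Type*} {G : SimpleGraph V} (hG : G.IsTree) {r w a b : V}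
    (ha : G.Adj w a) (hb : G.Adj w b) (hda : G.dist a r < G.dist w r)
    (hdb : G.dist b r < G.dist w r) : a = b := by
  have key : ∀ x, G.Adj w x → G.dist x r < G.dist w r →
      ∃ p : G.Walk x r, ∃ h : G.Adj w x, (Walk.cons h p).IsPath := by
    intro x hx hd
    obtain ⟨p, hp⟩ := hG.connected.exists_walk_length_eq_dist x r
    refine ⟨p, hx, ?_⟩
    apply Walk.isPath_of_length_eq_dist
    have h1 := hG.dist_eq_dist_add_one_of_adj r hx
    rw [dist_comm (u := r) (v := w), dist_comm (u := r) (v := x)] at h1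
    rw [Walk.length_cons, hp]
    omega
  obtain ⟨p, h1, hp⟩ := key a ha hda
  obtain ⟨q, h2, hq⟩ := key b hb hdb
  have := (hG.existsUnique_path w r).unique hp hq
  have h3 := congrArg Walk.snd this
  simpa using h3

lemma tree_exists_closer {V : Type*} {G : SimpleGraph V} (hG : G.IsTree) {r w : V}
    (h : w ≠ r) : ∃ a, G.Adj w a ∧ G.dist a r < G.dist w r := by
  obtain ⟨p, hp⟩ := hG.connected.exists_walk_length_eq_dist w r
  cases p with
  | nil => exact absurd rfl h
  | cons h1 q =>
    refine ⟨_, h1, ?_⟩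
    have := dist_le q
    rw [Walk.length_cons] at hp
    omega

lemma tree_no_triangle {V : Type*} {G : SimpleGraph V} (hG : G.IsTree) {u v w : V}
    (h1 : G.Adj u v) (h2 : G.Adj u w) : ¬ G.Adj v w := by
  intro h
  apply hG.dist_ne_of_adj u h
  rw [dist_eq_one_iff_adj.2 h1, dist_eq_one_iff_adj.2 h2]

lemma tree_cross {V : Type*} {G : SimpleGraph V} (hG : G.IsTree) {c d u v : V}
    (hcd : G.Adj c d) (hu : G.dist d u < G.dist c u) (hv : ¬ G.dist d v < G.dist c v)
    (huv : G.Adj u v) : u = d ∧ v = c := by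
  have a1 := hG.dist_eq_dist_add_one_of_adj u hcd
  have a2 := hG.dist_eq_dist_add_one_of_adj v hcd
  have a3 := hG.dist_eq_dist_add_one_of_adj c huv
  have a4 := hG.dist_eq_dist_add_one_of_adj d huv
  simp only [dist_comm (v := c), dist_comm (v := d)] at *
  by_cases hn : u = d
  · subst hn
    refine ⟨rfl, ?_⟩
    have : G.dist c v = 0 := by
      have : G.dist u u = 0 := dist_self
      omega
    exact ((hG.connected.dist_eq_zero_iff).1 this).symm
  · exfalso
    obtain ⟨u', hu', hlt⟩ := tree_exists_closer hG hn
    have b1 := hG.dist_eq_dist_add_one_of_adj d hu'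
    have b2 := hG.dist_eq_dist_add_one_of_adj c hu'
    have b3 := hG.dist_eq_dist_add_one_of_adj u' hcd
    simp only [dist_comm (v := c), dist_comm (v := d)] at *
    have : u' = v := by
      apply tree_parent_unique hG (r := c) hu' huv
      · simp only [dist_comm (v := c)]; omega
      · simp only [dist_comm (v := c)]; omega
    subst this
    omega

/-- a cycle through `x` and `L` -/
lemma exists_cyc {V : Type*} [DecidableEq V] (x f : V) (L : Finset V) (hx : x ∉ L) (hf : f ∉ L)
    (hxf : x ≠ f) :
    ∃ ρ : Equiv.Perm V, ρ x = f ∧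
      (∀ v ∈ insert x (insert f L), ρ v ∈ insert x (insert f L) ∧ ρ v ≠ v) ∧
      (L.Nonempty → ρ f ≠ x) ∧ (∀ v, v ∉ insert x (insert f L) → ρ v = v) := by
  induction L using Finset.induction_on with
  | empty =>
    refine ⟨Equiv.swap x f, ?_, ?_, ?_, ?_⟩
    · simp
    · simp [hxf, Ne.symm hxf]
    · simp
    · simp +contextual [Equiv.swap_apply_of_ne_of_ne]
  | insert a L ha ih =>
    simp only [Finset.mem_insert, not_or] at hx hf
    obtain ⟨ρ, h1, h2, h3, h4⟩ := ih hx.2 hf.2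
    have hρa : ρ a = a := h4 a (by simp [ha, Ne.symm hx.1, Ne.symm hf.1])
    refine ⟨ρ * Equiv.swap f a, ?_, ?_, ?_, ?_⟩
    · rw [Equiv.Perm.mul_apply, Equiv.swap_apply_of_ne_of_ne hxf hx.1, h1]
    · intro v hv
      rw [Equiv.Perm.mul_apply]
      by_cases hvf : v = f
      · subst hvf
        rw [Equiv.swap_apply_left, hρa]
        exact ⟨by simp, Ne.symm hf.1⟩
      by_cases hva : v = a
      · subst hva
        rw [Equiv.swap_apply_right]
        have := (h2 f (by simp)).1
        constructor
        · simp only [Finset.mem_insert] at this ⊢; tauto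
        · intro h
          rw [h] at this
          simp [ha, hvf, Ne.symm hx.1] at this
      · rw [Equiv.swap_apply_of_ne_of_ne hvf hva]
        have := h2 v (by simp only [Finset.mem_insert] at hv ⊢; tauto)
        refine ⟨?_, this.2⟩
        have := this.1
        simp only [Finset.mem_insert] at this ⊢; tauto
    · intro _
      rw [Equiv.Perm.mul_apply, Equiv.swap_apply_left, hρa]
      exact Ne.symm hx.1
    · intro v hv
      simp only [Finset.mem_insert, not_or] at hv
      rw [Equiv.Perm.mul_apply, Equiv.swap_apply_of_ne_of_ne hv.2.1 hv.2.2.1]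
      exact h4 v (by simp [hv])

/-- cyclic arrangement -/
lemma exists_tau {V : Type*} [DecidableEq V] (c : V) (A B : Finset V) (hcA : c ∉ A) (hcB : c ∉ B)
    (hAB : Disjoint A B) (hB : B.Nonempty) :
    ∃ τ : Equiv.Perm V, (∀ v, v ≠ c → v ∉ A → v ∉ B → τ v = v) ∧
      (∀ v ∈ A, τ v ∈ A ∪ B ∧ τ v ≠ v) ∧ (∀ v ∈ B, (τ v = c ∨ τ v ∈ B) ∧ τ v ≠ v) ∧
      τ c ∈ A ∪ B ∧ (A.Nonempty → τ c ∈ A) := by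
  induction A using Finset.induction_on with
  | empty =>
    induction hB using Finset.Nonempty.cons_induction with
    | singleton b =>
      refine ⟨Equiv.swap c b, ?_⟩
      simp at hcB
      refine ⟨?_, ?_, ?_, ?_, ?_⟩ <;> simp +contextual [Equiv.swap_apply_of_ne_of_ne, hcB]
    | cons b s hb hs ih =>
      rw [Finset.mem_cons, not_or] at hcB
      obtain ⟨τ, h1, h2, h3, h4, h5⟩ := ih hcB.2 (by simp)
      refine ⟨Equiv.swap c b * τ, ?_, by simp, ?_, ?_, by simp⟩
      · intro v hv _ hvB
        simp only [Finset.mem_cons, not_or] at hvB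
        rw [Equiv.Perm.mul_apply, h1 v hv (by simp) hvB.2, Equiv.swap_apply_of_ne_of_ne hv hvB.1]
      · intro v hv
        rw [Equiv.Perm.mul_apply]
        rw [Finset.mem_cons] at hv
        rcases hv with rfl | hv
        · rw [h1 v (Ne.symm hcB.1) (by simp) hb]; simp; exact hcB.1
        · obtain ⟨h6, h7⟩ := h3 v hv
          rcases h6 with h6 | h6
          · rw [h6]; simp; rintro rfl; exact hb hv
          · rw [Equiv.swap_apply_of_ne_of_ne]
            · exact ⟨Or.inr (by simp [h6]), h7⟩
            · rintro h; rw [h] at h6; exact hcB.2 h6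
            · rintro h; rw [h] at h6; exact hb h6
      · rw [Equiv.Perm.mul_apply]
        simp only [Finset.empty_union] at h4 ⊢
        rw [Equiv.swap_apply_of_ne_of_ne]
        · simp [h4]
        · rintro h; rw [h] at h4; exact hcB.2 h4
        · rintro h; rw [h] at h4; exact hb h4
  | insert a A ha ih =>
    simp only [Finset.mem_insert, not_or] at hcA
    rw [Finset.disjoint_insert_left] at hAB
    obtain ⟨τ, h1, h2, h3, h4, h5⟩ := ih hcA.2 hAB.2
    have hτa : τ a = a := h1 a (Ne.symm hcA.1) ha hAB.1
    refine ⟨τ * Equiv.swap c a, ?_, ?_, ?_, ?_, ?_⟩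
    · intro v hv hvA hvB
      simp only [Finset.mem_insert, not_or] at hvA
      rw [Equiv.Perm.mul_apply, Equiv.swap_apply_of_ne_of_ne hv hvA.1, h1 v hv hvA.2 hvB]
    · intro v hv
      rw [Equiv.Perm.mul_apply]
      rw [Finset.mem_insert] at hv
      rcases hv with rfl | hv
      · rw [Equiv.swap_apply_right]
        constructor
        · rw [Finset.insert_union]; exact Finset.mem_insert_of_mem h4
        · intro h; rw [h] at h4; simp [ha, hAB.1] at h4
      · rw [Equiv.swap_apply_of_ne_of_ne (by rintro rfl; exact hcA.2 hv) (by rintro rfl; exact ha hv)]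
        exact ⟨by rw [Finset.insert_union]; exact Finset.mem_insert_of_mem (h2 v hv).1, (h2 v hv).2⟩
    · intro v hv
      rw [Equiv.Perm.mul_apply, Equiv.swap_apply_of_ne_of_ne (by rintro rfl; exact hcB hv)
        (by rintro rfl; exact hAB.1 hv)]
      exact h3 v hv
    · simp [hτa]
    · simp [hτa]

/-- data on a branch -/
def Br {V : Type*} (G : SimpleGraph V) (c : V) (B : Finset V) (e f : V)
    (ρ : Equiv.Perm V) : Prop :=
  (∀ v ∈ B, ρ v ∈ B) ∧ e ∈ B ∧ f ∈ B ∧ ρ e = f ∧ (∀ v ∈ B, v ≠ e → ρ v ≠ v) ∧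
  (∀ u ∈ B, ∀ v ∈ B, G.Adj u v → u ≠ e → v ≠ e → ¬ G.Adj (ρ u) (ρ v)) ∧
  (∀ u ∈ B, ∀ v ∈ B, G.dist u v ≤ 2) ∧ G.dist c f ≤ 2 ∧ G.dist c e ≤ 2

lemma star_dist {V : Type*} {G : SimpleGraph V} (hG : G.IsTree) (B : Finset V) (x : V)
    (hs : ∀ w ∈ B, w ≠ x → G.Adj x w) : ∀ u ∈ B, ∀ v ∈ B, G.dist u v ≤ 2 := by
  have key : ∀ w ∈ B, G.dist x w ≤ 1 := by
    intro w hw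
    by_cases h : w = x
    · subst h; simp
    · exact (dist_eq_one_iff_adj.2 (hs w hw h)).le
  intro u hu v hv
  have h1 := key u hu
  have h2 := key v hv
  have h3 := hG.connected.dist_triangle (u := u) (v := x) (w := v)
  rw [dist_comm] at h1
  omega

lemma star_adj {V : Type*} {G : SimpleGraph V} (hG : G.IsTree) (B : Finset V) (x : V)
    (hs : ∀ w ∈ B, w ≠ x → G.Adj x w) : ∀ u ∈ B, ∀ v ∈ B, G.Adj u v → u = x ∨ v = x := by
  intro u hu v hv h
  by_contra hc
  push Not at hc
  exact tree_no_triangle hG (hs u hu hc.1) (hs v hv hc.2) h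

lemma dist_two {V : Type*} {G : SimpleGraph V} (hG : G.IsTree) {c d f : V} (hcd : G.Adj c d)
    (h : f = d ∨ G.Adj d f) : G.dist c f ≤ 2 := by
  have h1 := dist_eq_one_iff_adj.2 hcd
  rcases h with rfl | h
  · omega
  · have h2 := dist_eq_one_iff_adj.2 h
    have h3 := hG.connected.dist_triangle (u := c) (v := d) (w := f)
    omega

lemma branch_B {V : Type*} {G : SimpleGraph V} (hG : G.IsTree) (c d : V) (B : Finset V)
    (hcd : G.Adj c d) (hd : d ∈ B) (hs : ∀ w ∈ B, w ≠ d → G.Adj d w) (hex : ∃ w ∈ B, w ≠ d) :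
    ∃ e f ρ, Br G c B e f ρ ∧ f = d ∧ e ≠ d := by
  classical
  obtain ⟨w, hw, hwd⟩ := hex
  obtain ⟨ρ, h1, h2, h3, h4⟩ := exists_cyc d w ((B.erase d).erase w) (by simp) (by simp)
    (Ne.symm hwd)
  have hB : insert d (insert w ((B.erase d).erase w)) = B := by
    rw [Finset.insert_erase (by simp [hw, hwd]), Finset.insert_erase hd]
  rw [hB] at h2 h4
  have hρe : ρ (ρ⁻¹ d) = d := by simp
  have heB : ρ⁻¹ d ∈ B := by
    by_contra h
    have h5 := h4 _ h
    rw [hρe] at h5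
    rw [← h5] at h
    exact h hd
  have hne : ρ⁻¹ d ≠ d := by
    intro h
    rw [h] at hρe
    exact (h2 d hd).2 hρe
  refine ⟨ρ⁻¹ d, d, ρ, ⟨fun v hv => (h2 v hv).1, heB, hd, hρe, fun v hv _ => (h2 v hv).2, ?_,
    star_dist hG B d hs, dist_two hG hcd (Or.inl rfl), dist_two hG hcd (Or.inr (hs _ heB hne))⟩,
    rfl, hne⟩
  intro u hu v hv huv hue hve h
  have key : ∀ z, z ≠ ρ⁻¹ d → ρ z ≠ d := by
    intro z hz hz2
    apply hz
    rw [← hz2]; simp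
  rcases star_adj hG B d hs _ (h2 u hu).1 _ (h2 v hv).1 h with h | h
  · exact key u hue h
  · exact key v hve h

lemma branch_A {V : Type*} {G : SimpleGraph V} (hG : G.IsTree) (c d : V) (B : Finset V)
    (hcd : G.Adj c d) (hd : d ∈ B) (hs : ∀ w ∈ B, w ≠ d → G.Adj d w) :
    ∃ e f ρ, Br G c B e f ρ ∧ e = d := by
  classical
  by_cases hex : ∃ w ∈ B, w ≠ d
  · obtain ⟨w, hw, hwd⟩ := hex
    obtain ⟨ρ, h1, h2, h3, h4⟩ := exists_cyc d w ((B.erase d).erase w) (by simp) (by simp)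
      (Ne.symm hwd)
    have hB : insert d (insert w ((B.erase d).erase w)) = B := by
      rw [Finset.insert_erase (by simp [hw, hwd]), Finset.insert_erase hd]
    rw [hB] at h2 h4
    refine ⟨d, w, ρ, ⟨fun v hv => (h2 v hv).1, hd, hw, h1, fun v hv _ => (h2 v hv).2, ?_,
      star_dist hG B d hs, dist_two hG hcd (Or.inr (hs _ hw hwd)), dist_two hG hcd (Or.inl rfl)⟩,
      rfl⟩
    intro u hu v hv huv hue hve
    rcases star_adj hG B d hs _ hu _ hv huv with h | h
    · exact absurd h hue
    · exact absurd h hve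
  · push Not at hex
    refine ⟨d, d, 1, ⟨fun v hv => hv, hd, hd, rfl, fun v hv h => absurd (hex v hv) h, ?_,
      star_dist hG B d hs, dist_two hG hcd (Or.inl rfl), dist_two hG hcd (Or.inl rfl)⟩, rfl⟩
    intro u hu v hv huv hue hve
    exact absurd (hex u hu) hue

lemma branch_II {V : Type*} {G : SimpleGraph V} (hG : G.IsTree) (c d x : V) (B : Finset V)
    (hcd : G.Adj c d) (hd : d ∈ B) (hx : x ∈ B) (hxd : x ≠ d)
    (hs : ∀ w ∈ B, w ≠ x → G.Adj x w) (hex : ∃ w ∈ B, w ≠ d ∧ w ≠ x) :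
    ∃ e f ρ, Br G c B e f ρ ∧ f = d ∧ e ≠ d ∧ ¬ G.Adj d (ρ d) := by
  classical
  obtain ⟨w, hw, hwd, hwx⟩ := hex
  obtain ⟨ρ, h1, h2, h3, h4⟩ := exists_cyc x d ((B.erase x).erase d) (by simp) (by simp) hxd
  have hB : insert x (insert d ((B.erase x).erase d)) = B := by
    rw [Finset.insert_erase (by simp [hd, Ne.symm hxd]), Finset.insert_erase hx]
  rw [hB] at h2 h4
  refine ⟨x, d, ρ, ⟨fun v hv => (h2 v hv).1, hx, hd, h1, fun v hv _ => (h2 v hv).2, ?_,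
    star_dist hG B x hs, dist_two hG hcd (Or.inl rfl),
    dist_two hG hcd (Or.inr (hs _ hd (Ne.symm hxd)).symm)⟩, rfl, hxd, ?_⟩
  · intro u hu v hv huv hue hve
    rcases star_adj hG B x hs _ hu _ hv huv with h | h
    · exact absurd h hue
    · exact absurd h hve
  · intro h
    rcases star_adj hG B x hs _ hd _ (h2 d hd).1 h with h | h
    · exact hxd h.symm
    · exact h3 ⟨w, by simp [hw, hwd, hwx]⟩ h

/-- a good placement on the vertex set `S` -/
def Good {V : Type*} (G : SimpleGraph V) (S : Finset V) (σ : Equiv.Perm V) : Prop :=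
  (∀ v, v ∉ S → σ v = v) ∧ (∀ v ∈ S, σ v ∈ S ∧ σ v ≠ v ∧ G.dist v (σ v) ≤ 3) ∧
  ∀ u ∈ S, ∀ v ∈ S, G.Adj u v → ¬ G.Adj (σ u) (σ v) ∧ G.dist (σ u) (σ v) ≤ 6

lemma assemble {V : Type*} [Fintype V] [DecidableEq V] {G : SimpleGraph V} (hG : G.IsTree)
    (S D A B : Finset V) (c : V) (br e f : V → V) (ρ : V → Equiv.Perm V)
    (hcS : c ∈ S) (hbc : br c = c)
    (hD : ∀ d, d ∈ D ↔ d ∈ S ∧ G.Adj c d)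
    (hbD : ∀ v ∈ S, v ≠ c → br v ∈ D) (hbd : ∀ d ∈ D, br d = d)
    (hbadj : ∀ u ∈ S, ∀ v ∈ S, u ≠ c → v ≠ c → G.Adj u v → br u = br v)
    (hAB : Disjoint A B) (hD2 : ∀ d, d ∈ D ↔ d ∈ A ∨ d ∈ B) (hBne : B.Nonempty)
    (hBr : ∀ d ∈ D, Br G c (S.filter (br · = d)) (e d) (f d) (ρ d))
    (hA : ∀ d ∈ A, e d = d) (hB : ∀ d ∈ B, f d = d ∧ e d ≠ d)
    (hspec : (∀ d ∈ B, ¬ G.Adj d (ρ d d)) ∨ A.Nonempty) :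
    ∃ σ : Equiv.Perm V, Good G S σ ∧ G.dist c (σ c) ≤ 2 := by
  have hcD : c ∉ D := fun h => G.irrefl ((hD c).1 h).2
  obtain ⟨τ, t1, t2, t3, t4, t5⟩ := exists_tau c A B (fun h => hcD ((hD2 c).2 (Or.inl h)))
    (fun h => hcD ((hD2 c).2 (Or.inr h))) hAB hBne
  obtain ⟨E, hEc, hED⟩ : ∃ E : V → V, E c = c ∧ ∀ d ∈ D, E d = e d :=
    ⟨Function.update e c c, by simp, fun d hd => by
      rw [Function.update_of_ne]; rintro rfl; exact hcD hd⟩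
  obtain ⟨F, hFc, hFD⟩ : ∃ F : V → V, F c = c ∧ ∀ d ∈ D, F d = f d :=
    ⟨Function.update f c c, by simp, fun d hd => by
      rw [Function.update_of_ne]; rintro rfl; exact hcD hd⟩
  have hA' : ∀ d ∈ A, E d = d := fun d hd => by
    rw [hED d ((hD2 d).2 (Or.inl hd)), hA d hd]
  have hB' : ∀ d ∈ B, F d = d ∧ E d ≠ d := fun d hd => by
    rw [hED d ((hD2 d).2 (Or.inr hd)), hFD d ((hD2 d).2 (Or.inr hd))]; exact hB d hd
  have hBr' : ∀ d ∈ D, Br G c (S.filter (br · = d)) (E d) (F d) (ρ d) := fun d hd => by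
    rw [hED d hd, hFD d hd]; exact hBr d hd
  have hτD : ∀ d, d = c ∨ d ∈ D → τ d = c ∨ τ d ∈ D := by
    intro d hd
    rcases hd with rfl | hd
    · right; rw [hD2]; simpa using t4
    · rcases (hD2 d).1 hd with h | h
      · right; rw [hD2]; simpa using (t2 d h).1
      · rcases (t3 d h).1 with h | h
        · exact Or.inl h
        · right; rw [hD2]; exact Or.inr h
  have hτne : ∀ d, d = c ∨ d ∈ D → τ d ≠ d := by
    intro d hd
    rcases hd with rfl | hd
    · intro h
      apply hcD
      rw [hD2]
      rw [h] at t4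
      simpa using t4
    · rcases (hD2 d).1 hd with h | h
      · exact (t2 d h).2
      · exact (t3 d h).2
  have hK : ∀ v ∈ S, br v = c ∨ br v ∈ D := by
    intro v hv
    by_cases h : v = c
    · left; rw [h, hbc]
    · exact Or.inr (hbD v hv h)
  have hF : ∀ d, d = c ∨ d ∈ D → F d ∈ S ∧ br (F d) = d := by
    intro d hd
    rcases hd with rfl | hd
    · rw [hFc]; exact ⟨hcS, hbc⟩
    · have := (hBr' d hd).2.2.1
      simpa using this
  have hE : ∀ d, d = c ∨ d ∈ D → E d ∈ S ∧ br (E d) = d := by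
    intro d hd
    rcases hd with rfl | hd
    · rw [hEc]; exact ⟨hcS, hbc⟩
    · have := (hBr' d hd).2.1
      simpa using this
  have hR : ∀ v ∈ S, v ≠ E (br v) → v ≠ c ∧ br v ∈ D ∧ ρ (br v) v ∈ S ∧
      br (ρ (br v) v) = br v := by
    intro v hv h
    have hvc : v ≠ c := by
      rintro rfl
      rw [hbc, hEc] at h
      exact h rfl
    have hd := hbD v hv hvc
    have := (hBr' _ hd).1 v (by simp [hv])
    simp only [Finset.mem_filter] at this
    exact ⟨hvc, hd, this⟩
  have hbrc : ∀ v ∈ S, br v = c → v = c := by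
    intro v hv h
    by_contra hn
    exact hcD (h ▸ hbD v hv hn)
  -- adjacency between different branches
  have hcross : ∀ u ∈ S, ∀ v ∈ S, br u ≠ br v → G.Adj u v →
      (u = c ∧ v ∈ D) ∨ (v = c ∧ u ∈ D) := by
    intro u hu v hv h hadj
    by_cases huc : u = c
    · left; exact ⟨huc, (hD v).2 ⟨hv, huc ▸ hadj⟩⟩
    by_cases hvc : v = c
    · right; exact ⟨hvc, (hD u).2 ⟨hu, hvc ▸ hadj.symm⟩⟩
    exact absurd (hbadj u hu v hv huc hvc hadj) h
  let s : V → V := fun v => if v ∈ S then (if v = E (br v) then F (τ (br v)) else ρ (br v) v) else v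
  have s0 : ∀ v, v ∉ S → s v = v := fun v hv => by simp only [s, if_neg hv]
  have s1 : ∀ v ∈ S, v = E (br v) → s v = F (τ (br v)) := fun v hv h => by
    simp only [s, if_pos hv]; rw [if_pos h]
  have s2 : ∀ v ∈ S, v ≠ E (br v) → s v = ρ (br v) v := fun v hv h => by
    simp only [s, if_pos hv]; rw [if_neg h]
  have sS : ∀ v ∈ S, s v ∈ S := by
    intro v hv
    by_cases h : v = E (br v)
    · rw [s1 v hv h]; exact (hF _ (hτD _ (hK v hv))).1
    · rw [s2 v hv h]; exact (hR v hv h).2.2.1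
  have sb1 : ∀ v ∈ S, v = E (br v) → br (s v) = τ (br v) := fun v hv h => by
    rw [s1 v hv h]; exact (hF _ (hτD _ (hK v hv))).2
  have sb2 : ∀ v ∈ S, v ≠ E (br v) → br (s v) = br v := fun v hv h => by
    rw [s2 v hv h]; exact (hR v hv h).2.2.2
  have hmix : ∀ u ∈ S, ∀ v ∈ S, u = E (br u) → v ≠ E (br v) → s u ≠ s v := by
    intro u hu v hv h1 h2 h
    have h3 := congrArg br h
    rw [sb1 u hu h1, sb2 v hv h2] at h3
    rw [s1 u hu h1, s2 v hv h2, h3] at h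
    have hd := (hR v hv h2).2.1
    rw [← (hBr' _ hd).2.2.2.1] at h
    exact h2 ((ρ _).injective h).symm
  have sinj : Function.Injective s := by
    intro u v h
    by_cases hu : u ∈ S
    · by_cases hv : v ∈ S
      · by_cases h1 : u = E (br u)
        · by_cases h2 : v = E (br v)
          · have h3 := congrArg br h
            rw [sb1 u hu h1, sb1 v hv h2] at h3
            rw [h1, h2, τ.injective h3]
          · exact absurd h (hmix u hu v hv h1 h2)
        · by_cases h2 : v = E (br v)
          · exact absurd h.symm (hmix v hv u hu h2 h1)
          · have h3 := congrArg br h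
            rw [sb2 u hu h1, sb2 v hv h2] at h3
            rw [s2 u hu h1, s2 v hv h2, h3] at h
            exact (ρ _).injective h
      · have := sS u hu
        rw [h, s0 v hv] at this
        exact absurd this hv
    · by_cases hv : v ∈ S
      · have := sS v hv
        rw [← h, s0 u hu] at this
        exact absurd this hu
      · rwa [s0 u hu, s0 v hv] at h
  have hEcc : c = E (br c) := by rw [hbc, hEc]
  have hsc : s c = F (τ c) := by rw [s1 c hcS hEcc, hbc]
  have hτcD : τ c ∈ D := by rw [hD2]; simpa using t4
  have hdistF : ∀ d ∈ D, G.dist c (F d) ≤ 2 := fun d hd => (hBr' d hd).2.2.2.2.2.2.2.1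
  have hdistE : ∀ d ∈ D, G.dist c (E d) ≤ 2 := fun d hd => (hBr' d hd).2.2.2.2.2.2.2.2
  have hdistD : ∀ d ∈ D, G.dist c d = 1 := fun d hd => dist_eq_one_iff_adj.2 ((hD d).1 hd).2
  have hdepth : ∀ v ∈ S, G.dist c v ≤ 3 := by
    intro v hv
    by_cases hvc : v = c
    · rw [hvc]; simp
    · have hd := hbD v hv hvc
      have h1 := (hBr' _ hd).2.2.2.2.2.2.1 (br v)
        (by simp [hbd _ hd, ((hD _).1 hd).1]) v (by simp [hv])
      have h2 := hdistD _ hd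
      have h3 := hG.connected.dist_triangle (u := c) (v := br v) (w := v)
      omega
  refine ⟨Equiv.ofBijective s (Finite.injective_iff_bijective.1 sinj), ⟨?_, ?_, ?_⟩, ?_⟩
  · intro v hv
    exact s0 v hv
  · intro v hv
    refine ⟨sS v hv, ?_, ?_⟩
    · change s v ≠ v
      by_cases h : v = E (br v)
      · intro h2
        have h3 := sb1 v hv h
        rw [h2] at h3
        exact hτne _ (hK v hv) h3.symm
      · rw [s2 v hv h]
        exact (hBr' _ (hR v hv h).2.1).2.2.2.2.1 v (by simp [hv]) h
    · change G.dist v (s v) ≤ 3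
      by_cases h : v = E (br v)
      · rw [s1 v hv h]
        by_cases hvc : v = c
        · rw [hvc, hbc]
          have := hdistF _ hτcD
          omega
        · have hd := hbD v hv hvc
          have tri := hG.connected.dist_triangle (u := v) (v := c) (w := F (τ (br v)))
          rw [dist_comm (u := v) (v := c)] at tri
          rcases (hD2 _).1 hd with hd' | hd'
          · have h1 : G.dist c v = 1 := by
              rw [h, hA' _ hd']; exact hdistD _ hd
            have h2 := hdistF (τ (br v)) (by rw [hD2]; simpa using (t2 _ hd').1)
            omega
          · have h1 := hdistE _ hd
            rw [← h] at h1
            rcases (t3 _ hd').1 with h2 | h2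
            · rw [h2, hFc] at tri ⊢
              rw [dist_comm] at tri ⊢
              omega
            · rw [(hB' _ h2).1] at tri ⊢
              have := hdistD _ ((hD2 _).2 (Or.inr h2))
              omega
      · have h1 := hR v hv h
        rw [s2 v hv h]
        have := (hBr' _ h1.2.1).2.2.2.2.2.2.1 v (by simp [hv]) (ρ (br v) v) (by simp [h1.2.2])
        omega
  · have hnon : ∀ u ∈ S, ∀ v ∈ S, u = c → G.Adj u v → ¬ G.Adj (s u) (s v) := by
      intro u hu v hv huc hadj hs
      subst huc
      have hvD : v ∈ D := (hD v).2 ⟨hv, hadj⟩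
      have hbv := hbd v hvD
      have hbs := sb1 u hu hEcc
      rw [hbc] at hbs
      have hsuc : s u ≠ u := by
        intro h
        rw [h, hbc] at hbs
        exact hτne u (Or.inl rfl) hbs.symm
      rcases (hD2 v).1 hvD with hvA | hvB
      · have hv1 : v = E (br v) := by rw [hbv, hA' v hvA]
        have h2 := sb1 v hv hv1
        rw [hbv] at h2
        have hne : br (s u) ≠ br (s v) := by
          rw [hbs, h2]
          intro h
          have := τ.injective h
          rw [this] at hadj
          exact G.irrefl hadj
        rcases hcross _ (sS u hu) _ (sS v hv) hne hs with h | h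
        · exact hsuc h.1
        · rw [h.1, hbc] at h2
          have h3 := (t2 v hvA).1
          rw [← h2] at h3
          exact hcD ((hD2 _).2 (by simpa using h3))
      · have hv1 : v ≠ E (br v) := by rw [hbv]; exact (hB' v hvB).2.symm
        have h2 := sb2 v hv hv1
        rw [hbv] at h2
        by_cases hne : br (s u) = br (s v)
        · rw [hbs, h2] at hne
          rcases hspec with hsp | hsp
          · apply hsp v hvB
            rw [hsc, hne, (hB' v hvB).1, s2 v hv hv1, hbv] at hs
            exact hs
          · have h3 := t5 hsp
            rw [hne] at h3
            exact Finset.disjoint_left.1 hAB h3 hvB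
        · rcases hcross _ (sS u hu) _ (sS v hv) hne hs with h | h
          · exact hsuc h.1
          · rw [h.1, hbc] at h2
            rw [← h2] at hvD
            exact hcD hvD
    have hnon2 : ∀ u ∈ S, ∀ v ∈ S, u = E (br u) → u ≠ c → v ≠ c → G.Adj u v →
        ¬ G.Adj (s u) (s v) := by
      intro u hu v hv hue huc hvc hadj hs
      have hb := hbadj u hu v hv huc hvc hadj
      have hve : v ≠ E (br v) := by
        rw [← hb, ← hue]; exact hadj.ne.symm
      have hd := hbD u hu huc
      have h1 := sb1 u hu hue
      have h2 := sb2 v hv hve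
      rw [← hb] at h2
      have hne : br (s u) ≠ br (s v) := by
        rw [h1, h2]; exact hτne _ (Or.inr hd)
      rcases hcross _ (sS u hu) _ (sS v hv) hne hs with h | h
      · rw [h.1, hbc] at h1
        have hdB : br u ∈ B := by
          rcases (hD2 _).1 hd with h3 | h3
          · exfalso
            have := (t2 _ h3).1
            rw [← h1] at this
            exact hcD ((hD2 _).2 (by simpa using this))
          · exact h3
        have h5 := hbd _ h.2
        rw [h2] at h5
        rw [s2 v hv hve, ← hb] at h5
        have h6 := (hBr' _ hd).2.2.2.1
        rw [(hB' _ hdB).1] at h6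
        have h7 := (ρ _).injective (h6.trans h5)
        rw [hb] at h7
        exact hve h7.symm
      · rw [h.1, hbc] at h2
        exact hcD (h2 ▸ hd)
    intro u hu v hv hadj
    refine ⟨?_, ?_⟩
    · change ¬ G.Adj (s u) (s v)
      by_cases huc : u = c
      · exact hnon u hu v hv huc hadj
      by_cases hvc : v = c
      · exact fun h => hnon v hv u hu hvc hadj.symm h.symm
      by_cases h1 : u = E (br u)
      · exact hnon2 u hu v hv h1 huc hvc hadj
      by_cases h2 : v = E (br v)
      · exact fun h => hnon2 v hv u hu h2 hvc huc hadj.symm h.symm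
      have hb := hbadj u hu v hv huc hvc hadj
      rw [s2 u hu h1, s2 v hv h2, ← hb]
      rw [← hb] at h2
      exact (hBr' _ (hbD u hu huc)).2.2.2.2.2.1 u (by simp [hu]) v (by simp [hv, hb]) hadj h1 h2
    · change G.dist (s u) (s v) ≤ 6
      have h1 := hdepth _ (sS u hu)
      have h2 := hdepth _ (sS v hv)
      have tri := hG.connected.dist_triangle (u := s u) (v := c) (w := s v)
      rw [dist_comm (u := s u) (v := c)] at tri
      omega
  · change G.dist c (s c) ≤ 2
    rw [hsc]
    exact hdistF _ hτcD

/-- `S` spans a star -/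
def StarOn {V : Type*} (G : SimpleGraph V) (S : Finset V) : Prop :=
  ∃ x ∈ S, ∀ w ∈ S, w ≠ x → G.Adj x w

/-- the part of `S` on the `d`-side of the edge `cd` -/
noncomputable def sideOf {V : Type*} (G : SimpleGraph V) (S : Finset V) (c d : V) : Finset V :=
  S.filter (fun v => G.dist d v < G.dist c v)

lemma mem_sideOf {V : Type*} {G : SimpleGraph V} {S : Finset V} {c d v : V} :
    v ∈ sideOf G S c d ↔ v ∈ S ∧ G.dist d v < G.dist c v := by
  simp [sideOf]

lemma self_mem_sideOf {V : Type*} {G : SimpleGraph V} {S : Finset V} {c d : V} (hd : d ∈ S)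
    (h : G.Adj c d) : d ∈ sideOf G S c d := by
  rw [mem_sideOf, dist_eq_one_iff_adj.2 h]
  simp [hd]

lemma central {V : Type*} [Fintype V] {G : SimpleGraph V} (hG : G.IsTree)
    (S : Finset V) (c : V) (hcS : c ∈ S)
    (hcov : ∀ v ∈ S, v ≠ c → ∃ d ∈ S, G.Adj c d ∧ G.dist d v < G.dist c v)
    (hstar : ∀ d ∈ S, G.Adj c d → StarOn G (sideOf G S c d))
    (hns : ¬ StarOn G S) :
    ∃ σ : Equiv.Perm V, Good G S σ ∧ G.dist c (σ c) ≤ 2 := by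
  classical
  have hbr : ∀ v, ∃ d, (v = c → d = c) ∧
      (v ∈ S → v ≠ c → d ∈ S ∧ G.Adj c d ∧ G.dist d v < G.dist c v) := by
    intro v
    by_cases h : v = c
    · exact ⟨c, fun _ => rfl, fun _ h2 => absurd h h2⟩
    · by_cases hv : v ∈ S
      · obtain ⟨d, hd⟩ := hcov v hv h
        exact ⟨d, fun h2 => absurd h2 h, fun _ _ => hd⟩
      · exact ⟨c, fun _ => rfl, fun h2 => absurd h2 hv⟩
  choose br hbc hbr using hbr
  let D := S.filter (G.Adj c ·)
  have hD : ∀ d, d ∈ D ↔ d ∈ S ∧ G.Adj c d := by simp [D]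
  have huniq : ∀ d d' v, G.Adj c d → G.Adj c d' → G.dist d v < G.dist c v →
      G.dist d' v < G.dist c v → d = d' := fun d d' v h1 h2 h3 h4 =>
    tree_parent_unique hG h1 h2 h3 h4
  have hbrs : ∀ d ∈ D, S.filter (br · = d) = sideOf G S c d := by
    intro d hd
    rw [hD] at hd
    ext v
    rw [Finset.mem_filter, mem_sideOf]
    refine and_congr_right fun hv => ?_
    constructor
    · rintro rfl
      refine (hbr v hv ?_).2.2
      rintro rfl
      rw [hbc v rfl] at hd
      exact G.irrefl hd.2
    · intro h
      have hvc : v ≠ c := by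
        rintro rfl
        simp at h
      have := hbr v hv hvc
      exact huniq _ _ v this.2.1 hd.2 this.2.2 h
  have hbd : ∀ d ∈ D, br d = d := by
    intro d hd
    have := self_mem_sideOf ((hD d).1 hd).1 ((hD d).1 hd).2
    rw [← hbrs d hd] at this
    exact (Finset.mem_filter.1 this).2
  have hbD : ∀ v ∈ S, v ≠ c → br v ∈ D := fun v hv h =>
    (hD _).2 ⟨(hbr v hv h).1, (hbr v hv h).2.1⟩
  have hbadj : ∀ u ∈ S, ∀ v ∈ S, u ≠ c → v ≠ c → G.Adj u v → br u = br v := by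
    intro u hu v hv huc hvc h
    have h1 := hbr u hu huc
    have h2 := hbr v hv hvc
    apply huniq _ _ v h1.2.1 h2.2.1 _ h2.2.2
    by_contra h3
    exact hvc (tree_cross hG h1.2.1 h1.2.2 h3 h).2
  let T1 : V → Prop := fun d => ∀ w ∈ S.filter (br · = d), w ≠ d → G.Adj d w
  have hdm : ∀ d ∈ D, d ∈ S.filter (br · = d) := fun d hd => by
    simp [hbd d hd, ((hD d).1 hd).1]
  have hII : ∀ d ∈ D, ¬ T1 d →
      ∃ e f ρ, Br G c (S.filter (br · = d)) e f ρ ∧ f = d ∧ e ≠ d ∧ ¬ G.Adj d (ρ d) := by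
    intro d hd hT
    obtain ⟨x, hx, hxs⟩ := hstar d ((hD d).1 hd).1 ((hD d).1 hd).2
    rw [← hbrs d hd] at hx hxs
    have hxd : x ≠ d := by
      rintro rfl
      exact hT hxs
    refine branch_II hG c d x _ ((hD d).1 hd).2 (hdm d hd) hx hxd hxs ?_
    by_contra hcon
    push Not at hcon
    apply hT
    intro w hw hwd
    rw [hcon w hw hwd]
    exact (hxs d (hdm d hd) (Ne.symm hxd)).symm
  by_cases hall : ∀ d ∈ D, T1 d
  · -- all of type I
    have h1 : ∃ d ∈ D, ∃ w ∈ S.filter (br · = d), w ≠ d := by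
      by_contra hcon
      push Not at hcon
      apply hns
      refine ⟨c, hcS, ?_⟩
      intro w hw hwc
      have hd := hbD w hw hwc
      have := hcon _ hd w (by simp [hw])
      rw [this]
      exact ((hD _).1 hd).2
    obtain ⟨d0, hd0, hex⟩ := h1
    have hdata : ∀ d, ∃ e f ρ, d ∈ D → Br G c (S.filter (br · = d)) e f ρ ∧
        (d = d0 → f = d ∧ e ≠ d) ∧ (d ≠ d0 → e = d) := by
      intro d
      by_cases hd : d ∈ D
      · by_cases h : d = d0
        · subst h
          obtain ⟨e, f, ρ, h1, h2⟩ := branch_B hG c d _ ((hD d).1 hd).2 (hdm d hd) (hall d hd) hex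
          exact ⟨e, f, ρ, fun _ => ⟨h1, fun _ => h2, fun h => absurd rfl h⟩⟩
        · obtain ⟨e, f, ρ, h1, h2⟩ := branch_A hG c d _ ((hD d).1 hd).2 (hdm d hd) (hall d hd)
          exact ⟨e, f, ρ, fun _ => ⟨h1, fun h' => absurd h' h, fun _ => h2⟩⟩
      · exact ⟨d, d, 1, fun h => absurd h hd⟩
    choose e f ρ hdata using hdata
    refine assemble hG S D (D.erase d0) {d0} c br e f ρ hcS (hbc c rfl) hD hbD hbd hbadj
      (by simp) ?_ (by simp) (fun d hd => (hdata d hd).1) ?_ ?_ (Or.inr ?_)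
    · intro d
      by_cases h : d = d0
      · simp [h, hd0]
      · simp [h]
    · intro d hd
      rw [Finset.mem_erase] at hd
      exact (hdata d hd.2).2.2 hd.1
    · intro d hd
      rw [Finset.mem_singleton] at hd
      exact (hdata d (hd ▸ hd0)).2.1 hd
    · by_contra hcon
      rw [Finset.not_nonempty_iff_eq_empty] at hcon
      apply hns
      refine ⟨d0, ((hD d0).1 hd0).1, ?_⟩
      intro w hw hwd
      by_cases hwc : w = c
      · rw [hwc]; exact ((hD d0).1 hd0).2.symm
      · have hd := hbD w hw hwc
        have : br w = d0 := by
          by_contra h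
          have : br w ∈ D.erase d0 := by simp [h, hd]
          rw [hcon] at this
          simp at this
        exact hall d0 hd0 w (by simp [hw, this]) hwd
  · push Not at hall
    obtain ⟨d0, hd0, hT0⟩ := hall
    have hdata : ∀ d, ∃ e f ρ, d ∈ D → Br G c (S.filter (br · = d)) e f ρ ∧
        (¬ T1 d → f = d ∧ e ≠ d ∧ ¬ G.Adj d (ρ d)) ∧ (T1 d → e = d) := by
      intro d
      by_cases hd : d ∈ D
      · by_cases h : T1 d
        · obtain ⟨e, f, ρ, h1, h2⟩ := branch_A hG c d _ ((hD d).1 hd).2 (hdm d hd) h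
          exact ⟨e, f, ρ, fun _ => ⟨h1, fun h' => absurd h h', fun _ => h2⟩⟩
        · obtain ⟨e, f, ρ, h1, h2⟩ := hII d hd h
          exact ⟨e, f, ρ, fun _ => ⟨h1, fun _ => h2, fun h' => absurd h' h⟩⟩
      · exact ⟨d, d, 1, fun h => absurd h hd⟩
    choose e f ρ hdata using hdata
    refine assemble hG S D (D.filter T1) (D.filter (¬ T1 ·)) c br e f ρ hcS (hbc c rfl) hD hbD hbd
      hbadj (Finset.disjoint_filter_filter_not _ _ _) ?_ ⟨d0, by simp [hd0, hT0]⟩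
      (fun d hd => (hdata d hd).1) ?_ ?_ (Or.inl ?_)
    · intro d
      simp only [Finset.mem_filter]
      tauto
    · intro d hd
      rw [Finset.mem_filter] at hd
      exact (hdata d hd.1).2.2 hd.2
    · intro d hd
      rw [Finset.mem_filter] at hd
      have := (hdata d hd.1).2.1 hd.2
      exact ⟨this.1, this.2.1⟩
    · intro d hd
      rw [Finset.mem_filter] at hd
      exact ((hdata d hd.1).2.1 hd.2).2.2

/-- convexity of a vertex set in a tree -/
def Conv {V : Type*} (G : SimpleGraph V) (S : Finset V) : Prop :=
  ∀ c ∈ S, ∀ v ∈ S, v ≠ c → ∃ d ∈ S, G.Adj c d ∧ G.dist d v < G.dist c v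

lemma conv_side {V : Type*} {G : SimpleGraph V} (hG : G.IsTree) {S : Finset V} (hS : Conv G S)
    {p c : V} (h : G.Adj p c) : Conv G (sideOf G S p c) := by
  intro a ha v hv hva
  rw [mem_sideOf] at ha hv
  obtain ⟨d, hd, had, hlt⟩ := hS a ha.1 v hv.1 hva
  refine ⟨d, ?_, had, hlt⟩
  rw [mem_sideOf]
  refine ⟨hd, ?_⟩
  by_contra hcon
  obtain ⟨rfl, rfl⟩ := tree_cross hG h ha.2 hcon had
  have := hv.2
  omega

lemma glue {V : Type*} {G : SimpleGraph V} (hG : G.IsTree) {S : Finset V} {p c : V}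
    (hp : p ∈ S) (hc : c ∈ S)
    (h : G.Adj p c) (σ₁ σ₂ : Equiv.Perm V) (h1 : Good G (sideOf G S p c) σ₁)
    (h1c : G.dist c (σ₁ c) ≤ 2) (h2 : Good G (sideOf G S c p) σ₂) :
    ∃ σ, Good G S σ := by
  have hor : ∀ v ∈ S, (v ∈ sideOf G S p c ∧ v ∉ sideOf G S c p) ∨
      (v ∈ sideOf G S c p ∧ v ∉ sideOf G S p c) := by
    intro v hv
    simp only [mem_sideOf, hv, true_and]
    have := hG.dist_eq_dist_add_one_of_adj v h
    simp only [dist_comm (u := v)] at this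
    omega
  have e1 : ∀ v ∈ sideOf G S p c, (σ₁ * σ₂) v = σ₁ v := by
    intro v hv
    rw [Equiv.Perm.mul_apply, h2.1 v]
    rcases hor v (mem_sideOf.1 hv).1 with h | h
    · exact h.2
    · exact absurd hv h.2
  have e2 : ∀ v ∈ sideOf G S c p, (σ₁ * σ₂) v = σ₂ v := by
    intro v hv
    rw [Equiv.Perm.mul_apply, h1.1]
    have hv2 := (h2.2.1 v hv).1
    rcases hor _ (mem_sideOf.1 hv2).1 with h | h
    · exact absurd hv2 h.2
    · exact h.2
  have hcr : ∀ u ∈ sideOf G S p c, ∀ v ∈ sideOf G S c p, G.Adj u v → u = c ∧ v = p := by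
    intro u hu v hv huv
    refine tree_cross hG h (mem_sideOf.1 hu).2 ?_ huv
    have := (mem_sideOf.1 hv).2
    omega
  have hmain : ∀ u ∈ sideOf G S p c, ∀ v ∈ sideOf G S c p, G.Adj u v →
      ¬ G.Adj (σ₁ u) (σ₂ v) ∧ G.dist (σ₁ u) (σ₂ v) ≤ 6 := by
    intro u hu v hv huv
    obtain ⟨rfl, rfl⟩ := hcr u hu v hv huv
    have a1 := h1.2.1 u hu
    have a2 := h2.2.1 v hv
    constructor
    · intro hadj
      exact a1.2.1 (hcr _ a1.1 _ a2.1 hadj).1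
    · have b1 := hG.connected.dist_triangle (u := σ₁ u) (v := u) (w := σ₂ v)
      have b2 := hG.connected.dist_triangle (u := u) (v := v) (w := σ₂ v)
      have b3 := dist_eq_one_iff_adj.2 huv
      rw [dist_comm (u := σ₁ u) (v := u)] at b1
      have := a2.2.2
      omega
  refine ⟨σ₁ * σ₂, ?_, ?_, ?_⟩
  · intro v hv
    rw [Equiv.Perm.mul_apply, h2.1, h1.1]
    · exact fun h => hv (mem_sideOf.1 h).1
    · exact fun h => hv (mem_sideOf.1 h).1
  · intro v hv
    rcases hor v hv with hv | hv
    · rw [e1 v hv.1]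
      have := h1.2.1 v hv.1
      exact ⟨(mem_sideOf.1 this.1).1, this.2⟩
    · rw [e2 v hv.1]
      have := h2.2.1 v hv.1
      exact ⟨(mem_sideOf.1 this.1).1, this.2⟩
  · intro u hu v hv huv
    rcases hor u hu with hu | hu <;> rcases hor v hv with hv | hv
    · rw [e1 u hu.1, e1 v hv.1]; exact h1.2.2 u hu.1 v hv.1 huv
    · rw [e1 u hu.1, e2 v hv.1]; exact hmain u hu.1 v hv.1 huv
    · rw [e2 u hu.1, e1 v hv.1]
      have := hmain v hv.1 u hu.1 huv.symm
      rw [dist_comm]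
      exact ⟨fun h => this.1 h.symm, this.2⟩
    · rw [e2 u hu.1, e2 v hv.1]; exact h2.2.2 u hu.1 v hv.1 huv

lemma good_exists {V : Type*} [Fintype V] {G : SimpleGraph V} (hG : G.IsTree) (n : ℕ) :
    ∀ S : Finset V, S.card = n → S.Nonempty → Conv G S → ¬ StarOn G S →
      ∃ σ, Good G S σ := by
  induction n using Nat.strong_induction_on with
  | _ n ih =>
  intro S hn hne hconv hns
  by_cases hex : ∃ m, ∃ p ∈ S, ∃ c ∈ S, G.Adj p c ∧ ¬ StarOn G (sideOf G S p c) ∧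
      (sideOf G S p c).card = m
  · classical
    obtain ⟨p, hp, c, hc, hpc, hnst, hm⟩ := Nat.find_spec hex
    have hmin := fun m (hm : m < Nat.find hex) => Nat.find_min hex hm
    -- branches away from p are stars
    have hsub : ∀ d ∈ S, G.Adj c d → d ≠ p → sideOf G S c d ⊆ sideOf G S p c := by
      intro d hd hcd hdp v hv
      rw [mem_sideOf] at hv ⊢
      refine ⟨hv.1, ?_⟩
      by_contra hcon
      have := hG.dist_ne_of_adj v hpc
      simp only [dist_comm (u := v)] at this
      exact hdp (tree_parent_unique hG hcd hpc.symm hv.2 (by omega))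
    have hcside : c ∈ sideOf G S p c := self_mem_sideOf hc hpc
    have hst : ∀ d ∈ S, G.Adj c d → d ≠ p → StarOn G (sideOf G S c d) := by
      intro d hd hcd hdp
      by_contra hcon
      refine hmin (sideOf G S c d).card ?_ ⟨c, hc, d, hd, hcd, hcon, rfl⟩
      rw [← hm]
      apply Finset.card_lt_card
      refine ⟨hsub d hd hcd hdp, ?_⟩
      intro h
      have := h hcside
      rw [mem_sideOf] at this
      simp at this
    by_cases hT : StarOn G (sideOf G S c p)
    · obtain ⟨σ, h, _⟩ := central hG S c hc (hconv c hc) (by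
        intro d hd hcd
        by_cases h : d = p
        · rw [h]; exact hT
        · exact hst d hd hcd h) hns
      exact ⟨σ, h⟩
    · obtain ⟨σ₁, h1, h1c⟩ := central hG (sideOf G S p c) c hcside
        (conv_side hG hconv hpc c hcside) (by
          intro d hd hcd
          have hdp : d ≠ p := by
            rintro rfl
            rw [mem_sideOf] at hd
            simp at hd
          have hdS := (mem_sideOf.1 hd).1
          have heq : sideOf G (sideOf G S p c) c d = sideOf G S c d := by
            ext v
            constructor
            · intro hv
              rw [mem_sideOf] at hv
              exact mem_sideOf.2 ⟨(mem_sideOf.1 hv.1).1, hv.2⟩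
            · intro hv
              exact mem_sideOf.2 ⟨hsub d hdS hcd hdp hv, (mem_sideOf.1 hv).2⟩
          rw [heq]
          exact hst d hdS hcd hdp) hnst
      obtain ⟨σ₂, h2⟩ := ih (sideOf G S c p).card (by
          rw [← hn]
          apply Finset.card_lt_card
          refine ⟨fun v hv => (mem_sideOf.1 hv).1, fun h => ?_⟩
          have := h hc
          rw [mem_sideOf] at this
          simp at this) _ rfl ⟨p, self_mem_sideOf hp hpc.symm⟩ (conv_side hG hconv hpc.symm) hT
      exact glue hG hp hc hpc σ₁ σ₂ h1 h1c h2
  · obtain ⟨c, hc⟩ := hne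
    obtain ⟨σ, h, _⟩ := central hG S c hc (hconv c hc) (by
      intro d hd hcd
      by_contra hcon
      exact hex ⟨_, c, hc, d, hd, hcd, hcon, rfl⟩) hns
    exact ⟨σ, h⟩

/-- every non-star tree on at least 4 vertices admits a fixed-point-free
embedding into its complement whose image lies in T^6. -/
theorem stmt12 {V : Type*} [Fintype V] (G : SimpleGraph V)
    (hG : IsNonStarTree G) (hcard : 4 ≤ Fintype.card V) :
    ∃ σ : Equiv.Perm V,
      (∀ v, σ v ≠ v) ∧
      (∀ u v, G.Adj u v → ¬ G.Adj (σ u) (σ v)) ∧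
      (∀ u v, G.Adj u v → G.dist (σ u) (σ v) ≤ 6) := by
  obtain ⟨hT, hns⟩ := hG
  have hne : Nonempty V := hT.connected.nonempty
  obtain ⟨σ, _, h2, h3⟩ := good_exists hT _ Finset.univ rfl Finset.univ_nonempty
    (by
      intro c _ v _ hvc
      obtain ⟨d, h1, h2⟩ := tree_exists_closer hT (r := v) (w := c) (Ne.symm hvc)
      exact ⟨d, Finset.mem_univ _, h1, h2⟩)
    (by
      rintro ⟨x, _, hx⟩
      exact hns ⟨x, fun w hw => hx w (Finset.mem_univ _) hw⟩)
  exact ⟨σ, fun v => (h2 v (Finset.mem_univ _)).2.1,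
    fun u v h => (h3 u (Finset.mem_univ _) v (Finset.mem_univ _) h).1,
    fun u v h => (h3 u (Finset.mem_univ _) v (Finset.mem_univ _) h).2⟩
end

section
/- For every non-star tree T and every vertex x of T, there exists a (T,x)-well 2-placement: a fixed-point-free permutation σ of V(T) such that (1) σ is a 2-placement of T, (2) dist(σ(u),σ(v)) ≤ 6 for every edge uv of T, (3) dist(x,σ(x)) ≤ 2, (4) dist(y,σ(y)) ≤ 3 for every neighbor y of x, (5) dist(y,σ(y)) ≤ 4 for every leaf y of T, and (6) every cycle of σ has length at most 5. -/
open SimpleGraph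

namespace TP

/-- A rooted presentation of a tree: `ch v` are the children of `v`, `d` the depth. -/
structure RT {V : Type*} (G : SimpleGraph V) (ch : V → Finset V) (d : V → ℕ) : Prop where
  conn : G.Connected
  adj : ∀ u v, G.Adj u v ↔ v ∈ ch u ∨ u ∈ ch v
  dep : ∀ u v, v ∈ ch u → d v = d u + 1
  uniq : ∀ u u' v, v ∈ ch u → v ∈ ch u' → u = u'

/-- `w` is a (weak) descendant of `v`. -/
def Desc {V : Type*} (ch : V → Finset V) (v w : V) : Prop :=
  Relation.ReflTransGen (fun a b => b ∈ ch a) v w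

/-- The union of the subtrees rooted in `C`. -/
def DS {V : Type*} (ch : V → Finset V) (C : Finset V) : Set V := {w | ∃ c ∈ C, Desc ch c w}

/-- A good permutation with support `A`. -/
structure Gd {V : Type*} (G : SimpleGraph V) (ch : V → Finset V) (A : Set V)
    (σ : Equiv.Perm V) : Prop where
  supp : ∀ v, σ v ≠ v ↔ v ∈ A
  edge : ∀ u ∈ A, ∀ w ∈ ch u, w ∈ A → ¬ G.Adj (σ u) (σ w) ∧ G.dist (σ u) (σ w) ≤ 6
  leaf : ∀ v ∈ A, ch v = ∅ → G.dist v (σ v) ≤ 4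
  cyc : ∀ v, ∃ k, 1 ≤ k ∧ k ≤ 5 ∧ (σ ^ k) v = v

def Hang {V : Type*} (G : SimpleGraph V) (ch : V → Finset V) (p : V) (C : Finset V) : Prop :=
  ∃ σ, Gd G ch (DS ch C) σ ∧ ∀ c ∈ C, G.dist p (σ c) ≤ 3 ∧ G.dist c (σ c) ≤ 3

def Well {V : Type*} (G : SimpleGraph V) (ch : V → Finset V) (x : V) : Prop :=
  ∃ σ, Gd G ch {w | Desc ch x w} σ ∧ G.dist x (σ x) ≤ 2 ∧ ∀ c ∈ ch x, G.dist c (σ c) ≤ 3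

theorem exists_RT {V : Type*} [Fintype V] (G : SimpleGraph V) (hG : G.IsTree) (x : V) :
    ∃ (ch : V → Finset V) (d : V → ℕ), RT G ch d ∧ (∀ w, Desc ch x w) := by
  classical
  have key : ∀ u v, G.Adj u v → G.dist x u = G.dist x v + 1 ∨ G.dist x v = G.dist x u + 1 :=
    fun u v h => by
      have := hG.dist_eq_dist_add_one_of_adj x h
      omega
  refine ⟨fun v => Finset.univ.filter (fun w => G.Adj v w ∧ G.dist x w = G.dist x v + 1),
    fun v => G.dist x v, ⟨hG.connected, ?_, ?_, ?_⟩, ?_⟩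
  · intro u v
    simp only [Finset.mem_filter, Finset.mem_univ, true_and]
    constructor
    · intro h
      rcases key u v h with h1 | h1
      · exact Or.inr ⟨h.symm, h1⟩
      · exact Or.inl ⟨h, h1⟩
    · rintro (h | h)
      · exact h.1
      · exact h.1.symm
  · intro u v h
    simp only [Finset.mem_filter, Finset.mem_univ, true_and] at h
    exact h.2
  · intro u u' v h h'
    simp only [Finset.mem_filter, Finset.mem_univ, true_and] at h h'
    obtain ⟨p, hp⟩ := hG.connected.exists_walk_length_eq_dist x u
    obtain ⟨p', hp'⟩ := hG.connected.exists_walk_length_eq_dist x u'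
    have h1 : (p.concat h.1).IsPath := Walk.isPath_of_length_eq_dist _ (by
      rw [Walk.length_concat, hp, h.2])
    have h2 : (p'.concat h'.1).IsPath := Walk.isPath_of_length_eq_dist _ (by
      rw [Walk.length_concat, hp', h'.2])
    have h3 := (hG.existsUnique_path x v).unique h1 h2
    have h4 := congrArg (fun w => w.penultimate) h3
    simpa using h4
  · have : ∀ n w, G.dist x w = n → Desc (fun v => Finset.univ.filter
        (fun w => G.Adj v w ∧ G.dist x w = G.dist x v + 1)) x w := by
      intro n
      induction n with
      | zero =>
        intro w hw
        have := (hG.connected.dist_eq_zero_iff).1 hw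
        subst this
        exact Relation.ReflTransGen.refl
      | succ n ih =>
        intro w hw
        obtain ⟨p, hp⟩ := hG.connected.exists_walk_length_eq_dist x w
        have hnil : ¬ p.Nil := by
          intro h
          have := Walk.nil_iff_length_eq.1 h
          omega
        have hadj := p.adj_penultimate hnil
        have hlen : G.dist x p.penultimate ≤ n := by
          have := G.dist_le p.dropLast
          have h2 : p.dropLast.length = p.length - 1 := by simp
          omega
        have := key _ _ hadj
        refine Relation.ReflTransGen.tail (ih p.penultimate (by omega)) ?_
        simp only [Finset.mem_filter, Finset.mem_univ, true_and]
        exact ⟨hadj, by omega⟩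
    exact fun w => this _ w rfl

section
variable {V : Type*} {G : SimpleGraph V} {ch : V → Finset V} {d : V → ℕ}

theorem Desc.refl (v : V) : Desc ch v v := Relation.ReflTransGen.refl

theorem Desc.trans {a b c : V} (h : Desc ch a b) (h' : Desc ch b c) : Desc ch a c :=
  Relation.ReflTransGen.trans h h'

theorem Desc.child {a b : V} (h : b ∈ ch a) : Desc ch a b := Relation.ReflTransGen.single h

theorem Desc.step {a b c : V} (h : Desc ch a b) (h' : c ∈ ch b) : Desc ch a c :=
  Relation.ReflTransGen.tail h h'

theorem RT.desc_dep (T : RT G ch d) {a b : V} (h : Desc ch a b) : d a ≤ d b := by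
  induction h with
  | refl => exact le_rfl
  | tail _ h2 ih => have := T.dep _ _ h2; omega

/-- A descendant different from the top has its parent below the top. -/
theorem RT.desc_up (T : RT G ch d) {a b u : V} (h : Desc ch a b) (hb : b ≠ a) (hu : b ∈ ch u) :
    Desc ch a u := by
  cases h with
  | refl => exact absurd rfl hb
  | tail h1 h2 =>
    have := T.uniq _ _ _ h2 hu
    subst this
    exact h1

theorem RT.desc_total (T : RT G ch d) {a b w : V} (h : Desc ch a w) (h' : Desc ch b w) :
    Desc ch a b ∨ Desc ch b a := by
  induction h with
  | refl => exact Or.inr h'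
  | @tail u w' h1 h2 ih =>
    by_cases hw : w' = b
    · subst hw
      exact Or.inl (h1.tail h2)
    · exact ih (T.desc_up h' hw h2)

theorem RT.sib (T : RT G ch d) {p a b w : V} (ha : a ∈ ch p) (hb : b ∈ ch p)
    (h : Desc ch a w) (h' : Desc ch b w) : a = b := by
  by_contra hne
  rcases T.desc_total h h' with h1 | h1
  · have h2 := T.desc_up h1 (fun e => hne e.symm) hb
    have := T.desc_dep h2
    have := T.dep _ _ ha
    omega
  · have h2 := T.desc_up h1 hne ha
    have := T.desc_dep h2
    have := T.dep _ _ hb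
    omega

theorem RT.dist_child (T : RT G ch d) {a b : V} (h : b ∈ ch a) : G.dist a b = 1 :=
  dist_eq_one_iff_adj.2 ((T.adj _ _).2 (Or.inl h))

theorem Gd.maps {A : Set V} {σ : Equiv.Perm V} (h : Gd G ch A σ) {v : V} (hv : v ∈ A) :
    σ v ∈ A := by
  rw [← h.supp] at hv ⊢
  exact fun e => hv (σ.injective e)

theorem Gd.fix {A : Set V} {σ : Equiv.Perm V} (h : Gd G ch A σ) {v : V} (hv : v ∉ A) :
    σ v = v := by
  rw [← h.supp] at hv
  exact not_not.1 hv

theorem mul_left_apply {A B : Set V} {σ τ : Equiv.Perm V} (hτ : Gd G ch B τ)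
    (hd : Disjoint A B) {v : V} (hv : v ∈ A) : (σ * τ) v = σ v := by
  rw [Equiv.Perm.mul_apply, hτ.fix (Set.disjoint_left.1 hd hv)]

theorem mul_right_apply {A B : Set V} {σ τ : Equiv.Perm V} (hσ : Gd G ch A σ) (hτ : Gd G ch B τ)
    (hd : Disjoint A B) {v : V} (hv : v ∈ B) : (σ * τ) v = τ v := by
  rw [Equiv.Perm.mul_apply, hσ.fix (Set.disjoint_right.1 hd (hτ.maps hv))]

theorem Gd.mul {A B : Set V} {σ τ : Equiv.Perm V} (hσ : Gd G ch A σ) (hτ : Gd G ch B τ)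
    (hd : Disjoint A B)
    (h1 : ∀ u ∈ A, ∀ w ∈ ch u, w ∈ B → ¬ G.Adj (σ u) (τ w) ∧ G.dist (σ u) (τ w) ≤ 6)
    (h2 : ∀ u ∈ B, ∀ w ∈ ch u, w ∉ A) : Gd G ch (A ∪ B) (σ * τ) := by
  have hA := fun v (hv : v ∈ A) => mul_left_apply (σ := σ) hτ hd hv
  have hB := fun v (hv : v ∈ B) => mul_right_apply hσ hτ hd hv
  refine ⟨?_, ?_, ?_, ?_⟩
  · intro v
    by_cases ha : v ∈ A
    · rw [hA v ha]; simp [ha, (hσ.supp v).2 ha]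
    · by_cases hb : v ∈ B
      · rw [hB v hb]; simp [hb, (hτ.supp v).2 hb]
      · rw [Equiv.Perm.mul_apply, hτ.fix hb, hσ.fix ha]
        simp [ha, hb]
  · rintro u (hu | hu) w hw (hwm | hwm)
    · rw [hA u hu, hA w hwm]; exact hσ.edge u hu w hw hwm
    · rw [hA u hu, hB w hwm]; exact h1 u hu w hw hwm
    · exact absurd hwm (h2 u hu w hw)
    · rw [hB u hu, hB w hwm]; exact hτ.edge u hu w hw hwm
  · rintro v (hv | hv) hl
    · rw [hA v hv]; exact hσ.leaf v hv hl
    · rw [hB v hv]; exact hτ.leaf v hv hl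
  · intro v
    have hcomm : Commute σ τ := by
      apply Equiv.Perm.Disjoint.commute
      intro v
      by_cases ha : v ∈ A
      · exact Or.inr (hτ.fix (Set.disjoint_left.1 hd ha))
      · exact Or.inl (hσ.fix ha)
    by_cases ha : v ∈ A
    · obtain ⟨k, k1, k2, hk⟩ := hσ.cyc v
      refine ⟨k, k1, k2, ?_⟩
      rw [hcomm.mul_pow, Equiv.Perm.mul_apply,
        Equiv.Perm.pow_apply_eq_self_of_apply_eq_self (hτ.fix (Set.disjoint_left.1 hd ha)), hk]
    · obtain ⟨k, k1, k2, hk⟩ := hτ.cyc v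
      refine ⟨k, k1, k2, ?_⟩
      rw [hcomm.mul_pow, Equiv.Perm.mul_apply, hk,
        Equiv.Perm.pow_apply_eq_self_of_apply_eq_self (hσ.fix ha)]

theorem Gd.one : Gd G ch ∅ 1 := by
  refine ⟨by simp, by simp, by simp, fun v => ⟨1, by simp⟩⟩

theorem Hang.empty (p : V) : Hang G ch p ∅ := by
  refine ⟨1, ?_, by simp⟩
  have : DS ch ∅ = (∅ : Set V) := by ext; simp [DS]
  rw [this]; exact Gd.one

theorem Hang.union [DecidableEq V] (T : RT G ch d) {p : V} {C C' : Finset V} (hC : C ⊆ ch p)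
    (hC' : C' ⊆ ch p) (hd : Disjoint C C') (h : Hang G ch p C) (h' : Hang G ch p C') :
    Hang G ch p (C ∪ C') := by
  obtain ⟨σ, g, h1⟩ := h
  obtain ⟨τ, g', h1'⟩ := h'
  have e : DS ch (C ∪ C') = DS ch C ∪ DS ch C' := by
    ext w
    simp only [DS, Finset.mem_union, Set.mem_ofPred_eq, Set.mem_union]
    constructor
    · rintro ⟨c, hc | hc, h⟩
      · exact Or.inl ⟨c, hc, h⟩
      · exact Or.inr ⟨c, hc, h⟩
    · rintro (⟨c, hc, h⟩ | ⟨c, hc, h⟩)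
      · exact ⟨c, Or.inl hc, h⟩
      · exact ⟨c, Or.inr hc, h⟩
  have hdis : Disjoint (DS ch C) (DS ch C') := by
    rw [Set.disjoint_left]
    rintro w ⟨c, hc, h⟩ ⟨c', hc', h'⟩
    have := T.sib (hC hc) (hC' hc') h h'
    subst this
    exact Finset.disjoint_left.1 hd hc hc'
  refine ⟨σ * τ, ?_, ?_⟩
  · rw [e]
    refine g.mul g' hdis ?_ ?_
    · rintro u ⟨c, hc, h⟩ w hw hwB
      exact absurd hwB (Set.disjoint_left.1 hdis ⟨c, hc, h.step hw⟩)
    · rintro u ⟨c, hc, h⟩ w hw hwA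
      exact Set.disjoint_left.1 hdis hwA ⟨c, hc, h.step hw⟩
  · intro c hc
    rcases Finset.mem_union.1 hc with hc | hc
    · rw [mul_left_apply g' hdis ⟨c, hc, Desc.refl c⟩]; exact h1 c hc
    · rw [mul_right_apply g g' hdis ⟨c, hc, Desc.refl c⟩]; exact h1' c hc

/-- Attaching a hanging family to a vertex of the support. -/
theorem Gd.attach (T : RT G ch d) {A : Set V} {σ τ : Equiv.Perm V} {v : V} {C : Finset V}
    (hσ : Gd G ch A σ) (hv : v ∈ A) (hC : C ⊆ ch v) (hτ : Gd G ch (DS ch C) τ)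
    (hdis : Disjoint A (DS ch C)) (hdv : G.dist v (σ v) ≤ 3)
    (hτd : ∀ c ∈ C, G.dist v (τ c) ≤ 3) : Gd G ch (A ∪ DS ch C) (σ * τ) := by
  refine hσ.mul hτ hdis ?_ ?_
  · rintro u hu w hw ⟨c, hc, h⟩
    have hwc : w = c := by
      by_contra hne
      exact Set.disjoint_left.1 hdis hu ⟨c, hc, T.desc_up h hne hw⟩
    subst hwc
    have := T.uniq _ _ _ hw (hC hc)
    subst this
    constructor
    · intro hadj
      have m1 := hσ.maps hu
      have m2 := hτ.maps (v := w) ⟨w, hc, Desc.refl w⟩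
      rcases (T.adj _ _).1 hadj with h1 | h1
      · obtain ⟨c', hc', h'⟩ := m2
        have hne : τ w = c' := by
          by_contra hne
          exact Set.disjoint_left.1 hdis m1 ⟨c', hc', T.desc_up h' hne h1⟩
        rw [hne] at h1
        have := T.uniq _ _ _ h1 (hC hc')
        exact (hσ.supp u).2 hu this
      · obtain ⟨c', hc', h'⟩ := m2
        exact Set.disjoint_left.1 hdis m1 ⟨c', hc', h'.step h1⟩
    · have := T.conn.dist_triangle (u := σ u) (v := u) (w := τ w)
      have h3 := hτd w hc
      rw [dist_comm] at hdv
      omega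
  · rintro u ⟨c, hc, h⟩ w hw hwA
    exact Set.disjoint_left.1 hdis hwA ⟨c, hc, h.step hw⟩

end
end TP

namespace TP

section
variable {V : Type*} {G : SimpleGraph V} {ch : V → Finset V} {d : V → ℕ}

open Classical in
theorem assemble (T : RT G ch d) (S : Finset V) (σ₀ : Equiv.Perm V)
    (g : Gd G ch (↑S : Set V) σ₀)
    (hup : ∀ w ∈ S, ∀ u, w ∈ ch u → u ∈ S ∨ ∀ z ∈ S, d u < d z)
    (hH : ∀ v ∈ S, Hang G ch v (ch v \ S))
    (h3 : ∀ v ∈ S, ch v \ S = ∅ ∨ G.dist v (σ₀ v) ≤ 3) :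
    ∃ σ, Gd G ch {w | w ∈ S ∨ ∃ v ∈ S, w ∈ DS ch (ch v \ S)} σ ∧ (∀ v ∈ S, σ v = σ₀ v) ∧
      ∀ v ∈ S, ∀ c ∈ ch v \ S, G.dist c (σ c) ≤ 3 := by
  have noD : ∀ v ∈ S, ∀ c ∈ ch v \ S, ∀ w, Desc ch c w → w ∉ S := by
    intro v hv c hc w h
    rw [Finset.mem_sdiff] at hc
    induction h with
    | refl => exact hc.2
    | @tail a b h1 h2 ih =>
      intro hb
      rcases hup b hb a h2 with h | h
      · exact ih h
      · have h4 := h v hv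
        have h5 := T.desc_dep h1
        have h6 := T.dep _ _ hc.1
        omega
  have main : ∀ s : Finset V, s ⊆ S →
      ∃ σ, Gd G ch {w | w ∈ S ∨ ∃ v ∈ s, w ∈ DS ch (ch v \ S)} σ ∧ (∀ v ∈ S, σ v = σ₀ v) ∧
      ∀ v ∈ s, ∀ c ∈ ch v \ S, G.dist c (σ c) ≤ 3 := by
    intro s
    induction s using Finset.induction_on with
    | empty =>
      intro _
      refine ⟨σ₀, ?_, fun _ _ => rfl, by simp⟩
      have : {w | w ∈ S ∨ ∃ v ∈ (∅ : Finset V), w ∈ DS ch (ch v \ S)} = (↑S : Set V) := by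
        ext w; simp
      rw [this]; exact g
    | insert a s ha ih =>
      intro hs
      obtain ⟨σ, g1, e1, c1⟩ := ih (fun y hy => hs (Finset.mem_insert_of_mem hy))
      have haS : a ∈ S := hs (Finset.mem_insert_self _ _)
      have hset : {w | w ∈ S ∨ ∃ v ∈ insert a s, w ∈ DS ch (ch v \ S)} =
          {w | w ∈ S ∨ ∃ v ∈ s, w ∈ DS ch (ch v \ S)} ∪ DS ch (ch a \ S) := by
        ext w
        constructor
        · rintro (h | ⟨v, hv, h⟩)
          · exact Or.inl (Or.inl h)
          · rcases Finset.mem_insert.1 hv with rfl | hv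
            · exact Or.inr h
            · exact Or.inl (Or.inr ⟨v, hv, h⟩)
        · rintro ((h | ⟨v, hv, h⟩) | h)
          · exact Or.inl h
          · exact Or.inr ⟨v, Finset.mem_insert_of_mem hv, h⟩
          · exact Or.inr ⟨a, Finset.mem_insert_self _ _, h⟩
      rw [hset]
      rcases h3 a haS with h0 | h0
      · refine ⟨σ, ?_, e1, ?_⟩
        · have : DS ch (ch a \ S) = (∅ : Set V) := by rw [h0]; ext; simp [DS]
          rw [this, Set.union_empty]; exact g1
        · intro v hv c hc
          rcases Finset.mem_insert.1 hv with rfl | hv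
          · rw [h0] at hc; simp at hc
          · exact c1 v hv c hc
      · obtain ⟨τ, g2, hτ⟩ := hH a haS
        have hdis : Disjoint {w | w ∈ S ∨ ∃ v ∈ s, w ∈ DS ch (ch v \ S)} (DS ch (ch a \ S)) := by
          rw [Set.disjoint_left]
          rintro w (hw | ⟨v, hv, c, hc, h⟩) ⟨c', hc', h'⟩
          · exact noD a haS c' hc' w h' hw
          · have hvS : v ∈ S := hs (Finset.mem_insert_of_mem hv)
            have hcc : c ≠ c' := by
              rintro rfl
              have := T.uniq _ _ _ (Finset.mem_sdiff.1 hc).1 (Finset.mem_sdiff.1 hc').1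
              subst this
              exact ha hv
            rcases T.desc_total h h' with h4 | h4
            · exact noD v hvS c hc a (T.desc_up h4 hcc.symm (Finset.mem_sdiff.1 hc').1) haS
            · exact noD a haS c' hc' v (T.desc_up h4 hcc (Finset.mem_sdiff.1 hc).1) hvS
        refine ⟨σ * τ, ?_, ?_, ?_⟩
        · refine g1.attach T (v := a) (Or.inl haS) Finset.sdiff_subset g2 hdis ?_
            (fun c hc => (hτ c hc).1)
          rw [e1 a haS]; exact h0
        · intro v hv
          rw [mul_left_apply g2 hdis (Or.inl hv), e1 v hv]
        · intro v hv c hc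
          rcases Finset.mem_insert.1 hv with rfl | hv
          · rw [mul_right_apply g1 g2 hdis ⟨c, hc, Desc.refl c⟩]
            exact (hτ c hc).2
          · rw [mul_left_apply g2 hdis (Or.inr ⟨v, hv, c, hc, Desc.refl c⟩)]
            exact c1 v hv c hc
  exact main S (fun _ h => h)

/-- Pattern distance (with fuel). -/
def dst (q : ℕ → ℕ) : ℕ → ℕ → ℕ → ℕ
  | 0, _, _ => 100
  | k + 1, i, j => if i = j then 0 else if j < i then dst q k (q i) j + 1
      else dst q k i (q j) + 1

def Chk (b n : ℕ) (q : ℕ → ℕ) (st : ℕ → Bool) (t : ℕ → ℕ) : Prop :=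
  ∀ i < n, (0 < i → q i < i) ∧
    (b ≤ i → b ≤ t i ∧ t i < n ∧ t i ≠ i ∧
      (t (t i) = i ∨ t (t (t i)) = i ∨ t (t (t (t i))) = i ∨ t (t (t (t (t i)))) = i) ∧
      (dst q 20 i (t i) ≤ 3 ∨ st i = true ∧ dst q 20 i (t i) ≤ 4) ∧
      ∀ j < n, b ≤ j → t i = t j → i = j) ∧
    (0 < i → (q i = 0 → dst q 20 i (t i) ≤ 3) ∧
      (b ≤ q i → (0 < t i → q (t i) ≠ t (q i)) ∧ (0 < t (q i) → q (t (q i)) ≠ t i) ∧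
        dst q 20 (t (q i)) (t i) ≤ 6) ∧ (q i < b → dst q 20 0 (t i) ≤ 3)) ∧
    (i = 0 → b = 0 → dst q 20 0 (t 0) ≤ 2)

set_option synthInstance.maxSize 2000 in
set_option synthInstance.maxHeartbeats 400000 in
instance (b n : ℕ) (q : ℕ → ℕ) (st : ℕ → Bool) (t : ℕ → ℕ) : Decidable (Chk b n q st t) := by
  unfold Chk; infer_instance

theorem dst_le (T : RT G ch d) (n : ℕ) (q : ℕ → ℕ) (f : ℕ → V)
    (hf : ∀ i, 0 < i → i < n → q i < i ∧ f i ∈ ch (f (q i))) :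
    ∀ k i j m, i < n → j < n → dst q k i j ≤ m → m < 100 → G.dist (f i) (f j) ≤ m := by
  intro k
  induction k with
  | zero => intro i j m _ _ h; simp [dst] at h; omega
  | succ k ih =>
    intro i j m hi hj h hm
    rw [dst] at h
    split_ifs at h with h1 h2
    · subst h1; simp
    · obtain ⟨h3, h4⟩ := hf i (by omega) hi
      have h5 := ih (q i) j (m - 1) (by omega) hj (by omega) (by omega)
      have h6 := T.conn.dist_triangle (u := f i) (v := f (q i)) (w := f j)
      have h7 := T.dist_child h4
      rw [dist_comm] at h7
      omega
    · obtain ⟨h3, h4⟩ := hf j (by omega) hj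
      have h5 := ih i (q j) (m - 1) hi (by omega) (by omega) (by omega)
      have h6 := T.conn.dist_triangle (u := f i) (v := f (q j)) (w := f j)
      have h7 := T.dist_child h4
      omega

open Classical in
theorem core_perm [Fintype V] (T : RT G ch d) (b n : ℕ) (q : ℕ → ℕ) (st : ℕ → Bool) (t : ℕ → ℕ)
    (f : ℕ → V) (hc : Chk b n q st t)
    (hf : ∀ i, 0 < i → i < n → f i ∈ ch (f (q i)))
    (hinj : ∀ i < n, ∀ j < n, f i = f j → i = j) :
    ∃ σ, Gd G ch (↑((Finset.Ico b n).image f) : Set V) σ ∧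
      ∀ i, b ≤ i → i < n → σ (f i) = f (t i) := by
  have hf' : ∀ i, 0 < i → i < n → q i < i ∧ f i ∈ ch (f (q i)) :=
    fun i h0 hi => ⟨(hc i hi).1 h0, hf i h0 hi⟩
  have hdst := dst_le T n q f hf'
  have hdesc : ∀ i, i < n → Desc ch (f 0) (f i) := by
    intro i
    induction i using Nat.strong_induction_on with
    | _ i ih =>
      intro hi
      rcases Nat.eq_zero_or_pos i with rfl | h0
      · exact Desc.refl _
      · obtain ⟨h1, h2⟩ := hf' i h0 hi
        exact (ih (q i) h1 (by omega)).step h2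
  have hchild : ∀ i < n, ∀ j < n, f j ∈ ch (f i) → 0 < j ∧ q j = i := by
    intro i hi j hj h
    have h0 : 0 < j := by
      rcases Nat.eq_zero_or_pos j with rfl | h0
      · have := T.desc_dep (hdesc i hi)
        have := T.dep _ _ h
        omega
      · exact h0
    refine ⟨h0, ?_⟩
    obtain ⟨h1, h2⟩ := hf' j h0 hj
    exact hinj _ (by omega) _ hi (T.uniq _ _ _ h2 h)
  have ht : ∀ i, b ≤ i → i < n → b ≤ t i ∧ t i < n ∧ t i ≠ i := fun i h0 hi =>
    ⟨((hc i hi).2.1 h0).1, ((hc i hi).2.1 h0).2.1, ((hc i hi).2.1 h0).2.2.1⟩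
  let φ : V → V := fun v => if h : ∃ i, b ≤ i ∧ i < n ∧ f i = v then f (t h.choose) else v
  have φf : ∀ i, b ≤ i → i < n → φ (f i) = f (t i) := by
    intro i h0 hi
    have h : ∃ j, b ≤ j ∧ j < n ∧ f j = f i := ⟨i, h0, hi, rfl⟩
    have hs := h.choose_spec
    have e := hinj _ hs.2.1 _ hi hs.2.2
    simp only [φ, dif_pos h, e]
  have φn : ∀ v, (¬ ∃ i, b ≤ i ∧ i < n ∧ f i = v) → φ v = v := by
    intro v h
    simp only [φ, dif_neg h]
  have φinj : Function.Injective φ := by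
    intro v w hvw
    by_cases hv : ∃ i, b ≤ i ∧ i < n ∧ f i = v
    · obtain ⟨i, h0, hi, rfl⟩ := hv
      obtain ⟨t0, t1, t2⟩ := ht i h0 hi
      by_cases hw : ∃ i, b ≤ i ∧ i < n ∧ f i = w
      · obtain ⟨j, h0', hj, rfl⟩ := hw
        obtain ⟨t0', t1', t2'⟩ := ht j h0' hj
        rw [φf i h0 hi, φf j h0' hj] at hvw
        have := hinj _ t1 _ t1' hvw
        rw [((hc i hi).2.1 h0).2.2.2.2.2 j hj h0' this]
      · rw [φf i h0 hi, φn w hw] at hvw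
        exact absurd ⟨t i, t0, t1, hvw⟩ hw
    · by_cases hw : ∃ i, b ≤ i ∧ i < n ∧ f i = w
      · obtain ⟨j, h0', hj, rfl⟩ := hw
        obtain ⟨t0', t1', t2'⟩ := ht j h0' hj
        rw [φf j h0' hj, φn v hv] at hvw
        exact absurd ⟨t j, t0', t1', hvw.symm⟩ hv
      · rw [φn v hv, φn w hw] at hvw
        exact hvw
  let σ : Equiv.Perm V := Equiv.ofBijective φ (Finite.injective_iff_bijective.1 φinj)
  have σf : ∀ i, b ≤ i → i < n → σ (f i) = f (t i) := φf
  have σn : ∀ v, (¬ ∃ i, b ≤ i ∧ i < n ∧ f i = v) → σ v = v := φn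
  have mem : ∀ v, v ∈ (↑((Finset.Ico b n).image f) : Set V) ↔ ∃ i, b ≤ i ∧ i < n ∧ f i = v := by
    intro v
    simp only [Finset.coe_image, Set.mem_image, Finset.coe_Ico, Set.mem_Ico, and_assoc]
  refine ⟨σ, ⟨?_, ?_, ?_, ?_⟩, σf⟩
  · intro v
    rw [mem]
    constructor
    · intro h
      by_contra h'
      exact h (σn v h')
    · rintro ⟨i, h0, hi, rfl⟩
      obtain ⟨t0, t1, t2⟩ := ht i h0 hi
      rw [σf i h0 hi]
      exact fun e => t2 (hinj _ t1 _ hi e)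
  · intro u hu w hw hwA
    rw [mem] at hu hwA
    obtain ⟨a, a0, an, rfl⟩ := hu
    obtain ⟨i, i0, hi, rfl⟩ := hwA
    obtain ⟨ip, iq⟩ := hchild a an i hi hw
    obtain ⟨_, t1, _⟩ := ht a a0 an
    obtain ⟨_, t2, _⟩ := ht i i0 hi
    rw [σf a a0 an, σf i i0 hi]
    have h1 := ((hc i hi).2.2.1 ip).2.1
    rw [iq] at h1
    replace h1 := h1 a0
    obtain ⟨h1, h2, h3⟩ := h1
    refine ⟨?_, hdst _ _ _ _ t1 t2 h3 (by norm_num)⟩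
    intro hadj
    rcases (T.adj _ _).1 hadj with h | h
    · obtain ⟨h4, h5⟩ := hchild _ t1 _ t2 h
      exact h1 h4 h5
    · obtain ⟨h4, h5⟩ := hchild _ t2 _ t1 h
      exact h2 h4 h5
  · intro v hv _
    rw [mem] at hv
    obtain ⟨i, i0, hi, rfl⟩ := hv
    obtain ⟨_, t1, _⟩ := ht i i0 hi
    rw [σf i i0 hi]
    rcases ((hc i hi).2.1 i0).2.2.2.2.1 with h | h
    · exact (hdst _ _ _ _ hi t1 h (by norm_num)).trans (by norm_num)
    · exact hdst _ _ _ _ hi t1 h.2 (by norm_num)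
  · intro v
    by_cases hv : ∃ i, b ≤ i ∧ i < n ∧ f i = v
    · obtain ⟨i, i0, hi, rfl⟩ := hv
      obtain ⟨a1, b1, _⟩ := ht i i0 hi
      obtain ⟨a2, b2, _⟩ := ht _ a1 b1
      obtain ⟨a3, b3, _⟩ := ht _ a2 b2
      obtain ⟨a4, b4, _⟩ := ht _ a3 b3
      have e1 := σf _ i0 hi
      have e2 := σf _ a1 b1
      have e3 := σf _ a2 b2
      have e4 := σf _ a3 b3
      have e5 := σf _ a4 b4
      rcases ((hc i hi).2.1 i0).2.2.2.1 with h | h | h | h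
      · refine ⟨2, by norm_num, by norm_num, ?_⟩
        simp only [pow_succ, pow_zero, one_mul, Equiv.Perm.mul_apply, e1, e2, h]
      · refine ⟨3, by norm_num, by norm_num, ?_⟩
        simp only [pow_succ, pow_zero, one_mul, Equiv.Perm.mul_apply, e1, e2, e3, h]
      · refine ⟨4, by norm_num, by norm_num, ?_⟩
        simp only [pow_succ, pow_zero, one_mul, Equiv.Perm.mul_apply, e1, e2, e3, e4, h]
      · refine ⟨5, by norm_num, by norm_num, ?_⟩
        simp only [pow_succ, pow_zero, one_mul, Equiv.Perm.mul_apply, e1, e2, e3, e4, e5, h]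
    · exact ⟨1, by norm_num, by norm_num, by simpa using σn v hv⟩

end
end TP

namespace TP

/-- Patterns: a forest of subtrees hanging at a vertex; `nil` and `full` are the two ways
to end a list of siblings. -/
inductive PT : Type
  | nil : PT
  | full : PT
  | cons : PT → PT → PT

instance decPT : (a b : PT) → Decidable (a = b)
  | .nil, .nil => isTrue rfl
  | .full, .full => isTrue rfl
  | .cons a b, .cons c e =>
    match decPT a c, decPT b e with
    | isTrue h, isTrue h' => isTrue (by rw [h, h'])
    | isFalse h, _ => isFalse (fun e => h (PT.cons.inj e).1)
    | _, isFalse h => isFalse (fun e => h (PT.cons.inj e).2)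
  | .nil, .full => isFalse (fun h => PT.noConfusion h)
  | .nil, .cons _ _ => isFalse (fun h => PT.noConfusion h)
  | .full, .nil => isFalse (fun h => PT.noConfusion h)
  | .full, .cons _ _ => isFalse (fun h => PT.noConfusion h)
  | .cons _ _, .nil => isFalse (fun h => PT.noConfusion h)
  | .cons _ _, .full => isFalse (fun h => PT.noConfusion h)

def sz : PT → ℕ
  | .nil => 0
  | .full => 0
  | .cons F H => sz F + sz H + 1

/-- list of parent indices -/
def pl : PT → ℕ → ℕ → List ℕ
  | .nil, _, _ => []
  | .full, _, _ => []
  | .cons F H, i, n => i :: (pl F n (n + 1) ++ pl H i (n + 1 + sz F))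

def fk : PT → Bool
  | .nil => false
  | .full => true
  | .cons _ H => fk H

def ks : PT → List Bool
  | .nil => []
  | .full => []
  | .cons F H => fk F :: (ks F ++ ks H)

section
variable {V : Type*} {G : SimpleGraph V} {ch : V → Finset V} {d : V → ℕ}

/-- The subtree below `v` is a star. -/
def Star (ch : V → Finset V) (v : V) : Prop :=
  (∀ c ∈ ch v, ch c = ∅) ∨ ∃ c, ch v = {c} ∧ ∀ e ∈ ch c, ch e = ∅

open Classical in
/-- number of star vertices -/
noncomputable def sc (ch : V → Finset V) (C : Finset V) : ℕ := (C.filter (Star ch)).card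

open Classical in
/-- pattern `F` occurs at `p`, avoiding the children in `E`. -/
def R (ch : V → Finset V) : PT → V → Finset V → Prop
  | .nil, p, E => sc ch (ch p \ E) ≠ 1
  | .full, p, E => ch p \ E = ∅
  | .cons F H, p, E => ∃ c ∈ ch p \ E, R ch F c ∅ ∧ R ch H p (insert c E)

def Cr (ch : V → Finset V) (k : Bool) (C : Finset V) : Prop :=
  (k = true → C = ∅) ∧ sc ch C ≠ 1

theorem sc_empty : sc ch (∅ : Finset V) = 0 := by simp [sc]

theorem pl_length (F : PT) : ∀ i n, (pl F i n).length = sz F := by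
  induction F with
  | nil => intros; rfl
  | full => intros; rfl
  | cons F H ih1 ih2 => intro i n; simp [pl, sz, ih1, ih2]

theorem ks_length (F : PT) : (ks F).length = sz F := by
  induction F with
  | nil => rfl
  | full => rfl
  | cons F H ih1 ih2 => simp [ks, sz, ih1, ih2]

open Classical in
theorem flat (T : RT G ch d) (F : PT) : ∀ (p : V) (E : Finset V), R ch F p E →
    ∃ l : List V, l.length = sz F ∧ l.Nodup ∧ (∀ v ∈ l, v ∈ DS ch (ch p \ E)) ∧
      (∀ (m : List V) (i : ℕ), m[i]? = some p →
        List.Forall₂ (fun v j => ∃ w, (m ++ l)[j]? = some w ∧ v ∈ ch w) l (pl F i m.length)) ∧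
      List.Forall₂ (fun v k => Cr ch k (ch v \ l.toFinset)) l (ks F) ∧
      Cr ch (fk F) ((ch p \ E) \ l.toFinset) := by
  induction F with
  | nil =>
    intro p E h
    exact ⟨[], rfl, List.nodup_nil, by simp, by simp [pl], by simp [ks], by
      simp only [List.toFinset_nil, Finset.sdiff_empty]
      exact ⟨by simp [fk], h⟩⟩
  | full =>
    intro p E h
    refine ⟨[], rfl, List.nodup_nil, by simp, by simp [pl], by simp [ks], ?_⟩
    simp only [List.toFinset_nil, Finset.sdiff_empty]
    have h' : ch p \ E = ∅ := h
    rw [h']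
    exact ⟨fun _ => rfl, by rw [sc_empty]; norm_num⟩
  | cons F H ih1 ih2 =>
    intro p E h
    obtain ⟨c, hc, h1, h2⟩ := h
    obtain ⟨l1, len1, nd1, ds1, fl1, kr1, cr1⟩ := ih1 c ∅ h1
    obtain ⟨l2, len2, nd2, ds2, fl2, kr2, cr2⟩ := ih2 p _ h2
    obtain ⟨hcp, hcE⟩ := Finset.mem_sdiff.1 hc
    -- facts
    have A1 : ∀ v ∈ l1, Desc ch c v ∧ d c < d v := by
      intro v hv
      obtain ⟨c', hc', hd⟩ := ds1 v hv
      rw [Finset.sdiff_empty] at hc'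
      refine ⟨(Desc.child hc').trans hd, ?_⟩
      have := T.desc_dep hd
      have := T.dep _ _ hc'
      omega
    have A2 : ∀ v, Desc ch c v → v ∉ DS ch (ch p \ insert c E) := by
      rintro v hv ⟨c', hc', hd⟩
      rw [Finset.mem_sdiff, Finset.mem_insert, not_or] at hc'
      exact hc'.2.1 (T.sib hc'.1 hcp hd hv)
    have A3 : ∀ v, Desc ch c v → v ∉ l2 := fun v hv h => A2 v hv (ds2 v h)
    have A4 : ∀ v ∈ l2, ∀ w ∈ ch v, w ∈ DS ch (ch p \ insert c E) := by
      intro v hv w hw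
      obtain ⟨c', hc', hd⟩ := ds2 v hv
      exact ⟨c', hc', hd.step hw⟩
    have A5 : ∀ v, Desc ch c v → ch v \ (c :: (l1 ++ l2)).toFinset = ch v \ l1.toFinset := by
      intro v hv
      ext w
      simp only [Finset.mem_sdiff, List.mem_toFinset, List.mem_cons, List.mem_append]
      constructor
      · tauto
      · rintro ⟨hw, h3⟩
        refine ⟨hw, ?_⟩
        rintro (h | h | h)
        · have := T.dep _ _ hw
          have := T.desc_dep hv
          subst h
          omega
        · exact h3 h
        · exact A3 w (hv.step hw) h
    refine ⟨c :: (l1 ++ l2), ?_, ?_, ?_, ?_, ?_, ?_⟩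
    · simp [sz, len1, len2]
    · rw [List.nodup_cons, List.mem_append, List.nodup_append']
      refine ⟨?_, nd1, nd2, ?_⟩
      · rintro (h | h)
        · exact absurd (A1 c h).2 (lt_irrefl _)
        · exact A3 c (Desc.refl c) h
      · intro v hv hv2
        exact A3 v (A1 v hv).1 hv2
    · intro v hv
      rw [List.mem_cons, List.mem_append] at hv
      rcases hv with rfl | hv | hv
      · exact ⟨_, hc, Desc.refl _⟩
      · exact ⟨_, hc, (A1 v hv).1⟩
      · obtain ⟨c', hc', hd⟩ := ds2 v hv
        refine ⟨c', ?_, hd⟩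
        simp only [Finset.mem_sdiff, Finset.mem_insert, not_or] at hc' ⊢
        exact ⟨hc'.1, hc'.2.2⟩
    · intro m i hm
      have hlt : i < m.length := (List.getElem?_eq_some_iff.1 hm).1
      rw [pl]
      refine List.Forall₂.cons ⟨p, ?_, hcp⟩ (List.rel_append ?_ ?_)
      · rw [List.getElem?_append_left hlt]; exact hm
      · have h3 := fl1 (m ++ [c]) m.length (by simp)
        simp only [List.length_append, List.length_singleton] at h3
        refine h3.imp ?_
        rintro v j ⟨w, hw, hv⟩
        refine ⟨w, ?_, hv⟩
        have : m ++ c :: (l1 ++ l2) = (m ++ [c] ++ l1) ++ l2 := by simp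
        rw [this, List.getElem?_append_left (List.getElem?_eq_some_iff.1 hw).1]
        exact hw
      · have h3 := fl2 (m ++ [c] ++ l1) i (by
          rw [List.append_assoc, List.getElem?_append_left hlt]; exact hm)
        have e : (m ++ [c] ++ l1).length = m.length + 1 + sz F := by simp [len1]; omega
        rw [e] at h3
        refine h3.imp ?_
        rintro v j ⟨w, hw, hv⟩
        refine ⟨w, ?_, hv⟩
        rw [← hw]; simp
    · rw [ks]
      refine List.Forall₂.cons ?_ (List.rel_append ?_ ?_)
      · rw [A5 c (Desc.refl c)]
        rw [Finset.sdiff_empty] at cr1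
        exact cr1
      · have h3 : List.Forall₂ (fun v k => v ∈ l1 ∧ Cr ch k (ch v \ l1.toFinset)) l1 (ks F) :=
          (List.forall₂_and_left _ _).2 ⟨fun _ h => h, kr1⟩
        refine h3.imp ?_
        rintro v k ⟨hv, hk⟩
        rw [A5 v (A1 v hv).1]; exact hk
      · have h3 : List.Forall₂ (fun v k => v ∈ l2 ∧ Cr ch k (ch v \ l2.toFinset)) l2 (ks H) :=
          (List.forall₂_and_left _ _).2 ⟨fun _ h => h, kr2⟩
        refine h3.imp ?_
        rintro v k ⟨hv, hk⟩
        have e : ch v \ (c :: (l1 ++ l2)).toFinset = ch v \ l2.toFinset := by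
          ext w
          simp only [Finset.mem_sdiff, List.mem_toFinset, List.mem_cons, List.mem_append]
          constructor
          · tauto
          · rintro ⟨hw, h3⟩
            refine ⟨hw, ?_⟩
            have h4 := A4 v hv w hw
            rintro (h | h | h)
            · subst h; exact A2 _ (Desc.refl _) h4
            · exact A2 _ (A1 w h).1 h4
            · exact h3 h
        rw [e]; exact hk
    · have e : (ch p \ E) \ (c :: (l1 ++ l2)).toFinset = (ch p \ insert c E) \ l2.toFinset := by
        ext w
        simp only [Finset.mem_sdiff, List.mem_toFinset, List.mem_cons, List.mem_append,
          Finset.mem_insert]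
        constructor
        · tauto
        · rintro ⟨⟨hw, h3⟩, h4⟩
          have h5 : w ∉ l1 := by
            intro h
            have := (A1 w h).2
            have := T.dep _ _ hw
            have := T.dep _ _ hcp
            omega
          tauto
      rw [e]
      exact cr2

def pq (F : PT) (i : ℕ) : ℕ := (0 :: pl F 0 1).getD i 0
def pst (F : PT) (i : ℕ) : Bool := (fk F :: ks F).getD i false

open Classical in
theorem flat' (T : RT G ch d) (F : PT) (p : V) (E : Finset V) (h : R ch F p E) :
    ∃ f : ℕ → V, f 0 = p ∧ (∀ i, 0 < i → i < sz F + 1 → f i ∈ ch (f (pq F i))) ∧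
      (∀ i < sz F + 1, ∀ j < sz F + 1, f i = f j → i = j) ∧
      (∀ i, 0 < i → i < sz F + 1 → f i ∈ DS ch (ch p \ E)) ∧
      (∀ i, 0 < i → i < sz F + 1 →
        Cr ch (pst F i) (ch (f i) \ (Finset.Ico 1 (sz F + 1)).image f)) ∧
      Cr ch (fk F) ((ch p \ E) \ (Finset.Ico 1 (sz F + 1)).image f) := by
  obtain ⟨l, len, nd, ds, fl, kr, cr⟩ := flat T F p E h
  have hs : ∀ i (hi : i < l.length), (p :: l).getD (i + 1) p = l[i] := by
    intro i hi
    simp [List.getD_eq_getElem?_getD, hi]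
  have himg : (Finset.Ico 1 (sz F + 1)).image (fun i => (p :: l).getD i p) = l.toFinset := by
    ext w
    simp only [Finset.mem_image, Finset.mem_Ico, List.mem_toFinset]
    constructor
    · rintro ⟨i, ⟨h1, h2⟩, rfl⟩
      obtain ⟨i, rfl⟩ : ∃ k, i = k + 1 := ⟨i - 1, by omega⟩
      rw [hs i (by omega)]
      exact List.getElem_mem _
    · intro hw
      obtain ⟨i, hi, rfl⟩ := List.getElem_of_mem hw
      exact ⟨i + 1, ⟨by omega, by omega⟩, hs i hi⟩
  have hp : p ∉ l := by
    intro hp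
    obtain ⟨c, hc, hd⟩ := ds p hp
    have := T.dep _ _ (Finset.mem_sdiff.1 hc).1
    have := T.desc_dep hd
    omega
  have nd' : (p :: l).Nodup := List.nodup_cons.2 ⟨hp, nd⟩
  have fl0 := fl [p] 0 (by simp)
  refine ⟨fun i => (p :: l).getD i p, rfl, ?_, ?_, ?_, ?_, ?_⟩
  · intro i h0 hi
    obtain ⟨i, rfl⟩ : ∃ k, i = k + 1 := ⟨i - 1, by omega⟩
    have h3 := (List.forall₂_iff_get.1 fl0).2 i (by omega) (by rw [pl_length]; omega)
    obtain ⟨w, hw, hv⟩ := h3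
    have e : pq F (i + 1) = (pl F 0 1).get ⟨i, by rw [pl_length]; omega⟩ := by
      have : i < (pl F 0 1).length := by rw [pl_length]; omega
      simp [pq, List.getD_eq_getElem?_getD, this]
    simp only [hs i (by omega)]
    have e2 : (p :: l).getD (pq F (i + 1)) p = w := by
      rw [e, List.getD_eq_getElem?_getD]
      simp only [List.singleton_append, List.length_singleton] at hw
      rw [hw]; rfl
    rw [e2]; exact hv
  · intro i hi j hj e
    have hi' : i < (p :: l).length := by simp; omega
    have hj' : j < (p :: l).length := by simp; omega
    simp only [List.getD_eq_getElem?_getD, List.getElem?_eq_getElem hi',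
      List.getElem?_eq_getElem hj', Option.getD_some] at e
    exact (nd'.getElem_inj_iff).1 e
  · intro i h0 hi
    obtain ⟨i, rfl⟩ : ∃ k, i = k + 1 := ⟨i - 1, by omega⟩
    simp only [hs i (by omega)]
    exact ds _ (List.getElem_mem _)
  · intro i h0 hi
    rw [himg]
    obtain ⟨i, rfl⟩ : ∃ k, i = k + 1 := ⟨i - 1, by omega⟩
    have h3 := (List.forall₂_iff_get.1 kr).2 i (by omega) (by rw [ks_length]; omega)
    have e : pst F (i + 1) = (ks F).get ⟨i, by rw [ks_length]; omega⟩ := by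
      have : i < (ks F).length := by rw [ks_length]; omega
      simp [pst, List.getD_eq_getElem?_getD, this]
    simp only [hs i (by omega)]
    rw [e]; exact h3
  · rw [himg]; exact cr

end
end TP

namespace TP

section
variable {V : Type*} {G : SimpleGraph V} {ch : V → Finset V} {d : V → ℕ}

/-- pattern check, for pattern `F` with the permutation given by the list `t`. -/
def CkP (b : ℕ) (F : PT) (t : List ℕ) : Prop :=
  Chk b (sz F + 1) (pq F) (pst F) (fun i => t.getD i 0)

instance (b : ℕ) (F : PT) (t : List ℕ) : Decidable (CkP b F t) := by
  unfold CkP; infer_instance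

/-- Everything below `v` may be hung. -/
def Q (G : SimpleGraph V) (ch : V → Finset V) (v : V) : Prop :=
  ∀ C ⊆ ch v, sc ch C ≠ 1 → Hang G ch v C

open Classical in
theorem core_true [Fintype V] (T : RT G ch d) (F : PT) (t : List ℕ) (hc : CkP 0 F t) (p : V)
    (h : R ch F p ∅) (hQ : ∀ v, Desc ch p v → Q G ch v) : Well G ch p := by
  obtain ⟨f, f0, fch, finj, fds, fcr, fcr0⟩ := flat' T F p ∅ h
  obtain ⟨σ₀, g, hσ⟩ := core_perm T 0 (sz F + 1) (pq F) (pst F) _ f hc fch finj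
  set n := sz F + 1 with hn
  have hdst := dst_le T n (pq F) f (fun i h0 hi => ⟨(hc i hi).1 h0, fch i h0 hi⟩)
  have hdesc : ∀ i, 0 < i → i < n → Desc ch p (f i) ∧ d p < d (f i) := by
    intro i h0 hi
    obtain ⟨c, hc, hd⟩ := fds i h0 hi
    rw [Finset.sdiff_empty] at hc
    have := T.desc_dep hd
    have := T.dep _ _ hc
    exact ⟨(Desc.child hc).trans hd, by omega⟩
  have hS : ∀ v, Desc ch p v →
      ch v \ (Finset.Ico 0 n).image f = ch v \ (Finset.Ico 1 n).image f := by
    intro v hv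
    ext w
    simp only [Finset.mem_sdiff, Finset.mem_image, Finset.mem_Ico]
    constructor
    · rintro ⟨h1, h2⟩
      exact ⟨h1, fun ⟨i, hi, e⟩ => h2 ⟨i, by omega, e⟩⟩
    · rintro ⟨h1, h2⟩
      refine ⟨h1, fun ⟨i, hi, e⟩ => ?_⟩
      rcases Nat.eq_zero_or_pos i with rfl | h0
      · rw [f0] at e
        subst e
        have := T.desc_dep hv
        have := T.dep _ _ h1
        omega
      · exact h2 ⟨i, ⟨h0, hi.2⟩, e⟩
  have hcr : ∀ i < n, Cr ch (pst F i) (ch (f i) \ (Finset.Ico 0 n).image f) := by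
    intro i hi
    rcases Nat.eq_zero_or_pos i with rfl | h0
    · rw [f0, hS p (Desc.refl p)]
      rw [Finset.sdiff_empty] at fcr0
      exact fcr0
    · rw [hS _ (hdesc i h0 hi).1]
      exact fcr i h0 hi
  have hD : ∀ i < n, Desc ch p (f i) := by
    intro i hi
    rcases Nat.eq_zero_or_pos i with rfl | h0
    · rw [f0]; exact Desc.refl p
    · exact (hdesc i h0 hi).1
  have mem : ∀ v, v ∈ (Finset.Ico 0 n).image f ↔ ∃ i < n, f i = v := by
    intro v
    simp only [Finset.mem_image, Finset.mem_Ico, Nat.zero_le, true_and]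
  have hdt : ∀ i < n, ∀ m < 100, dst (pq F) 20 i (t.getD i 0) ≤ m →
      G.dist (f i) (σ₀ (f i)) ≤ m := by
    intro i hi m hm h1
    rw [hσ i (Nat.zero_le _) hi]
    exact hdst _ _ _ _ hi ((hc i hi).2.1 (Nat.zero_le _)).2.1 h1 hm
  have hasm := assemble T ((Finset.Ico 0 n).image f) σ₀ g ?_ ?_ ?_
  · obtain ⟨σ, g', e', c'⟩ := hasm
    have hp : p ∈ (Finset.Ico 0 n).image f := (mem p).2 ⟨0, by omega, f0⟩
    refine ⟨σ, ?_, ?_, ?_⟩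
    · convert g' using 1
      ext w
      constructor
      · intro hw
        induction hw with
        | refl => exact Or.inl hp
        | @tail a b h1 h2 ih =>
          rcases ih with ih | ⟨v, hv, c, hcc, hd⟩
          · by_cases hb : b ∈ (Finset.Ico 0 n).image f
            · exact Or.inl hb
            · exact Or.inr ⟨a, ih, b, Finset.mem_sdiff.2 ⟨h2, hb⟩, Desc.refl b⟩
          · exact Or.inr ⟨v, hv, c, hcc, hd.step h2⟩
      · rintro (hw | ⟨v, hv, c, hcc, hd⟩)
        · obtain ⟨i, hi, rfl⟩ := (mem w).1 hw
          exact hD i hi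
        · obtain ⟨i, hi, rfl⟩ := (mem v).1 hv
          exact ((hD i hi).step (Finset.mem_sdiff.1 hcc).1).trans hd
    · rw [e' p hp]
      have := hdt 0 (by omega) 2 (by norm_num) ((hc 0 (by omega)).2.2.2 rfl rfl)
      rw [f0] at this
      exact this
    · intro c hcp
      by_cases hcS : c ∈ (Finset.Ico 0 n).image f
      · rw [e' c hcS]
        obtain ⟨i, hi, rfl⟩ := (mem c).1 hcS
        have h0 : 0 < i := by
          rcases Nat.eq_zero_or_pos i with rfl | h0
          · rw [f0] at hcp
            have := T.dep _ _ hcp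
            omega
          · exact h0
        have hq : pq F i = 0 := by
          have := (hc i hi).1 h0
          refine finj _ (by omega) _ (by omega) ?_
          rw [f0]
          exact T.uniq _ _ _ (fch i h0 hi) hcp
        exact hdt i hi 3 (by norm_num) (((hc i hi).2.2.1 h0).1 hq)
      · exact c' p hp c (Finset.mem_sdiff.2 ⟨hcp, hcS⟩)
  · intro w hw u hu
    obtain ⟨i, hi, rfl⟩ := (mem w).1 hw
    rcases Nat.eq_zero_or_pos i with rfl | h0
    · right
      intro z hz
      obtain ⟨j, hj, rfl⟩ := (mem z).1 hz
      have := T.desc_dep (hD j hj)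
      have := T.dep _ _ hu
      rw [f0] at this
      omega
    · left
      rw [← T.uniq _ _ _ (fch i h0 hi) hu]
      have := (hc i hi).1 h0
      exact (mem _).2 ⟨_, by omega, rfl⟩
  · intro v hv
    obtain ⟨i, hi, rfl⟩ := (mem v).1 hv
    exact hQ _ (hD i hi) _ Finset.sdiff_subset (hcr i hi).2
  · intro v hv
    obtain ⟨i, hi, rfl⟩ := (mem v).1 hv
    rcases ((hc i hi).2.1 (Nat.zero_le _)).2.2.2.2.1 with h1 | h1
    · exact Or.inr (hdt i hi 3 (by norm_num) h1)
    · exact Or.inl ((hcr i hi).1 h1.1)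

open Classical in
theorem core_false [Fintype V] (T : RT G ch d) (F : PT) (t : List ℕ) (hc : CkP 1 F t)
    (hF : fk F = true) (p : V) (C : Finset V) (hC : C ⊆ ch p)
    (h : R ch F p (ch p \ C)) (hQ : ∀ v, Desc ch p v → d p < d v → Q G ch v) : Hang G ch p C := by
  obtain ⟨f, f0, fch, finj, fds, fcr, fcr0⟩ := flat' T F p _ h
  rw [Finset.sdiff_sdiff_eq_self hC] at fds fcr0
  obtain ⟨σ₀, g, hσ⟩ := core_perm T 1 (sz F + 1) (pq F) (pst F) _ f hc fch finj
  set n := sz F + 1 with hn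
  have hdst := dst_le T n (pq F) f (fun i h0 hi => ⟨(hc i hi).1 h0, fch i h0 hi⟩)
  have hD : ∀ i, 0 < i → i < n → Desc ch p (f i) ∧ d p < d (f i) := by
    intro i h0 hi
    obtain ⟨c, hc, hd⟩ := fds i h0 hi
    have := T.desc_dep hd
    have := T.dep _ _ (hC hc)
    exact ⟨(Desc.child (hC hc)).trans hd, by omega⟩
  have mem : ∀ v, v ∈ (Finset.Ico 1 n).image f ↔ ∃ i, 0 < i ∧ i < n ∧ f i = v := by
    intro v
    simp only [Finset.mem_image, Finset.mem_Ico, and_assoc]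
    rfl
  have hdt : ∀ i, 0 < i → i < n → ∀ m < 100, dst (pq F) 20 i (t.getD i 0) ≤ m →
      G.dist (f i) (σ₀ (f i)) ≤ m := by
    intro i h0 hi m hm h1
    rw [hσ i h0 hi]
    exact hdst _ _ _ _ hi ((hc i hi).2.1 h0).2.1 h1 hm
  have hasm := assemble T ((Finset.Ico 1 n).image f) σ₀ g ?_ ?_ ?_
  · obtain ⟨σ, g', e', c'⟩ := hasm
    have hCS : ∀ c ∈ C, c ∈ (Finset.Ico 1 n).image f := by
      intro c hcC
      by_contra hcn
      have : c ∈ C \ (Finset.Ico 1 n).image f := Finset.mem_sdiff.2 ⟨hcC, hcn⟩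
      rw [fcr0.1 hF] at this
      simp at this
    refine ⟨σ, ?_, ?_⟩
    · convert g' using 1
      ext w
      constructor
      · rintro ⟨c, hcC, hw⟩
        induction hw with
        | refl => exact Or.inl (hCS c hcC)
        | @tail a b h1 h2 ih =>
          rcases ih with ih | ⟨v, hv, c, hcc, hd⟩
          · by_cases hb : b ∈ (Finset.Ico 1 n).image f
            · exact Or.inl hb
            · exact Or.inr ⟨a, ih, b, Finset.mem_sdiff.2 ⟨h2, hb⟩, Desc.refl b⟩
          · exact Or.inr ⟨v, hv, c, hcc, hd.step h2⟩
      · rintro (hw | ⟨v, hv, c, hcc, hd⟩)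
        · obtain ⟨i, h0, hi, rfl⟩ := (mem w).1 hw
          exact fds i h0 hi
        · obtain ⟨i, h0, hi, rfl⟩ := (mem v).1 hv
          obtain ⟨c2, hc2, hd2⟩ := fds i h0 hi
          exact ⟨c2, hc2, (hd2.step (Finset.mem_sdiff.1 hcc).1).trans hd⟩
    · intro c hcC
      rw [e' c (hCS c hcC)]
      obtain ⟨i, h0, hi, rfl⟩ := (mem c).1 (hCS c hcC)
      have hq : pq F i = 0 := by
        have := (hc i hi).1 h0
        refine finj _ (by omega) _ (by omega) ?_
        rw [f0]
        exact T.uniq _ _ _ (fch i h0 hi) (hC hcC)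
      have h1 := (hc i hi).2.2.1 h0
      refine ⟨?_, hdt i h0 hi 3 (by norm_num) (h1.1 hq)⟩
      rw [hσ i h0 hi, ← f0]
      exact hdst _ _ _ _ (by omega) ((hc i hi).2.1 h0).2.1 (h1.2.2 (by omega)) (by norm_num)
  · intro w hw u hu
    obtain ⟨i, h0, hi, rfl⟩ := (mem w).1 hw
    rw [← T.uniq _ _ _ (fch i h0 hi) hu]
    have := (hc i hi).1 h0
    rcases Nat.eq_zero_or_pos (pq F i) with hq | hq
    · right
      intro z hz
      obtain ⟨j, hj0, hj, rfl⟩ := (mem z).1 hz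
      rw [hq, f0]
      exact (hD j hj0 hj).2
    · left
      exact (mem _).2 ⟨_, hq, by omega, rfl⟩
  · intro v hv
    obtain ⟨i, h0, hi, rfl⟩ := (mem v).1 hv
    exact hQ _ (hD i h0 hi).1 (hD i h0 hi).2 _ Finset.sdiff_subset (fcr i h0 hi).2
  · intro v hv
    obtain ⟨i, h0, hi, rfl⟩ := (mem v).1 hv
    rcases ((hc i hi).2.1 h0).2.2.2.2.1 with h1 | h1
    · exact Or.inr (hdt i h0 hi 3 (by norm_num) h1)
    · exact Or.inl ((fcr i h0 hi).1 h1.1)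

end
end TP

namespace TP

def scs : ℕ → PT
  | 0 => .nil
  | 1 => .cons .nil .nil
  | _ => .cons (.cons .full .nil) .nil

def pc : ℕ → PT
  | 0 => .nil
  | k + 1 => .cons (pc k) .nil

def tab2 : List (List ℕ) :=
  [[0, 2, 1],
   [0, 2, 3, 1],
   [0, 2, 4, 1, 3],
   [0, 2, 3, 1],
   [0, 2, 3, 4, 1],
   [0, 2, 3, 5, 1, 4],
   [0, 3, 1, 4, 2],
   [0, 3, 4, 2, 5, 1],
   [0, 5, 3, 4, 2, 6, 1]]

def tab3 : List (List ℕ) :=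
  [[0, 2, 3, 1],
   [0, 2, 3, 4, 1],
   [0, 2, 3, 5, 1, 4],
   [0, 2, 1, 4, 3],
   [0, 2, 3, 4, 5, 1],
   [0, 3, 4, 1, 6, 2, 5],
   [0, 2, 1, 4, 5, 3],
   [0, 2, 6, 4, 5, 3, 1],
   [0, 2, 6, 4, 5, 3, 7, 1],
   [0, 2, 3, 4, 1],
   [0, 2, 3, 4, 5, 1],
   [0, 2, 3, 5, 6, 1, 4],
   [0, 2, 3, 1, 5, 4],
   [0, 4, 5, 6, 1, 2, 3],
   [0, 2, 5, 6, 1, 4, 7, 3],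
   [0, 2, 3, 1, 5, 6, 4],
   [0, 2, 3, 7, 5, 6, 4, 1],
   [0, 2, 3, 7, 5, 6, 4, 8, 1],
   [0, 3, 1, 4, 5, 2],
   [0, 3, 1, 5, 6, 2, 4],
   [0, 3, 1, 5, 6, 2, 7, 4],
   [0, 3, 1, 4, 2, 6, 5],
   [0, 5, 3, 4, 2, 6, 7, 1],
   [0, 3, 6, 2, 7, 1, 5, 8, 4],
   [0, 3, 1, 4, 2, 6, 7, 5],
   [0, 3, 4, 2, 8, 6, 7, 5, 1],
   [0, 5, 3, 7, 8, 6, 1, 2, 9, 4]]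

theorem chk2 : ∀ i < 3, ∀ j < 3,
    CkP 1 (.cons (scs i) (.cons (scs j) .full)) (tab2.getD (3 * i + j) []) := by
  decide +kernel

theorem chk3 : ∀ i < 3, ∀ j < 3, ∀ k < 3,
    CkP 1 (.cons (scs i) (.cons (scs j) (.cons (scs k) .full)))
      (tab3.getD (9 * i + 3 * j + k) []) := by
  decide +kernel

section
variable {V : Type*} {G : SimpleGraph V} {ch : V → Finset V} {d : V → ℕ}

theorem star_of_leaf {v : V} (h : ch v = ∅) : Star ch v := by
  left; simp [h]

open Classical in
theorem sc_star {p c : V} {E : Finset V} (hc : c ∈ ch p \ E) (hs : Star ch c) :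
    sc ch (ch p \ insert c E) + 1 = sc ch (ch p \ E) := by
  unfold sc
  rw [Finset.sdiff_insert, Finset.filter_erase]
  exact Finset.card_erase_add_one (Finset.mem_filter.2 ⟨hc, hs⟩)

open Classical in
theorem sc_nonstar {p c : V} {E : Finset V} (hs : ¬ Star ch c) :
    sc ch (ch p \ insert c E) = sc ch (ch p \ E) := by
  unfold sc
  rw [Finset.sdiff_insert, Finset.filter_erase, Finset.erase_eq_of_notMem]
  simp [hs]

open Classical in
theorem sc_ex {C : Finset V} (h : sc ch C ≠ 0) : ∃ c ∈ C, Star ch c := by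
  unfold sc at h
  obtain ⟨c, hc⟩ := Finset.card_pos.1 (Nat.pos_of_ne_zero h)
  exact ⟨c, (Finset.mem_filter.1 hc).1, (Finset.mem_filter.1 hc).2⟩

open Classical in
theorem chainS (y : V) (h : Star ch y) : ∃ i < 3, R ch (scs i) y ∅ := by
  by_cases h1 : sc ch (ch y \ ∅) = 1
  · obtain ⟨c, hc, hs⟩ := sc_ex (C := ch y \ ∅) (ch := ch) (by omega)
    have e1 := sc_star hc hs
    by_cases h2 : sc ch (ch c \ ∅) = 1
    · obtain ⟨e, he, hs2⟩ := sc_ex (C := ch c \ ∅) (ch := ch) (by omega)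
      have e2 := sc_star he hs2
      refine ⟨2, by norm_num, c, hc, ⟨e, he, ?_, ?_⟩, ?_⟩
      · change ch e \ ∅ = ∅
        rw [Finset.sdiff_empty] at hc he ⊢
        rcases h with h | ⟨c', hc', h⟩
        · rw [h c hc] at he; simp at he
        · rw [hc', Finset.mem_singleton] at hc
          subst hc
          exact h e he
      · change sc ch _ ≠ 1; omega
      · change sc ch _ ≠ 1; omega
    · refine ⟨1, by norm_num, c, hc, h2, ?_⟩
      change sc ch _ ≠ 1; omega
  · exact ⟨0, by norm_num, h1⟩

open Classical in
theorem chainP (y : V) (h : Star ch y) : ∃ i < 3, R ch (pc i) y ∅ := by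
  obtain ⟨i, hi, h1⟩ := chainS y h
  refine ⟨i, hi, ?_⟩
  match i, hi, h1 with
  | 0, _, h1 => exact h1
  | 1, _, h1 => exact h1
  | 2, _, h1 =>
    obtain ⟨c, hc, ⟨e, he, h2, h3⟩, h4⟩ := h1
    refine ⟨c, hc, ⟨e, he, ?_, h3⟩, h4⟩
    change sc ch _ ≠ 1
    have h2' : ch e \ ∅ = ∅ := h2
    rw [h2', sc_empty]; norm_num

theorem hang_well (T : RT G ch d) {p z : V} (hz : z ∈ ch p) (h : Well G ch z) :
    Hang G ch p {z} := by
  obtain ⟨σ, g, h1, h2⟩ := h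
  refine ⟨σ, ?_, ?_⟩
  · convert g using 1
    ext w; simp [DS]
  · intro c hc
    rw [Finset.mem_singleton] at hc
    subst hc
    have := T.conn.dist_triangle (u := p) (v := c) (w := σ c)
    have := T.dist_child hz
    omega

open Classical in
theorem hang_pair [Fintype V] (T : RT G ch d) {p a b : V} (ha : a ∈ ch p) (hb : b ∈ ch p)
    (hab : a ≠ b) (sa : Star ch a) (sb : Star ch b)
    (hQ : ∀ v, Desc ch p v → d p < d v → Q G ch v) : Hang G ch p {a, b} := by
  obtain ⟨i, hi, ri⟩ := chainS a sa
  obtain ⟨j, hj, rj⟩ := chainS b sb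
  refine core_false T _ _ (chk2 i hi j hj) rfl p _ ?_ ⟨a, ?_, ri, b, ?_, rj, ?_⟩ hQ
  · intro x hx
    simp only [Finset.mem_insert, Finset.mem_singleton] at hx
    rcases hx with rfl | rfl <;> assumption
  · simp [ha]
  · simp [hb, hab.symm]
  · change _ \ _ = ∅
    ext x
    simp only [Finset.mem_sdiff, Finset.mem_insert, Finset.mem_singleton, Finset.notMem_empty]
    tauto

open Classical in
theorem hang_triple [Fintype V] (T : RT G ch d) {p a b c : V} (ha : a ∈ ch p) (hb : b ∈ ch p)
    (hc : c ∈ ch p) (hab : a ≠ b) (hac : a ≠ c) (hbc : b ≠ c)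
    (sa : Star ch a) (sb : Star ch b) (sc : Star ch c)
    (hQ : ∀ v, Desc ch p v → d p < d v → Q G ch v) : Hang G ch p {a, b, c} := by
  obtain ⟨i, hi, ri⟩ := chainS a sa
  obtain ⟨j, hj, rj⟩ := chainS b sb
  obtain ⟨k, hk, rk⟩ := chainS c sc
  refine core_false T _ _ (chk3 i hi j hj k hk) rfl p _ ?_
    ⟨a, ?_, ri, b, ?_, rj, c, ?_, rk, ?_⟩ hQ
  · intro x hx
    simp only [Finset.mem_insert, Finset.mem_singleton] at hx
    rcases hx with rfl | rfl | rfl <;> assumption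
  · simp [ha]
  · simp [hb, hab.symm]
  · simp [hc, hac.symm, hbc.symm]
  · change _ \ _ = ∅
    ext x
    simp only [Finset.mem_sdiff, Finset.mem_insert, Finset.mem_singleton, Finset.notMem_empty]
    tauto

open Classical in
theorem Q_step [Fintype V] (T : RT G ch d) (p : V)
    (hW : ∀ z ∈ ch p, ¬ Star ch z → Well G ch z)
    (hQ : ∀ v, Desc ch p v → d p < d v → Q G ch v) : Q G ch p := by
  intro C
  induction hn : C.card using Nat.strong_induction_on generalizing C with
  | _ n ih =>
    intro hC hs
    by_cases hns : ∃ z ∈ C, ¬ Star ch z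
    · obtain ⟨z, hz, hzs⟩ := hns
      have e : C = {z} ∪ C.erase z := by
        rw [← Finset.insert_eq, Finset.insert_erase hz]
      rw [e]
      have hE : C.erase z ⊆ ch p := (Finset.erase_subset _ _).trans hC
      refine Hang.union T (Finset.singleton_subset_iff.2 (hC hz)) hE (by simp)
        (hang_well T (hC hz) (hW z (hC hz) hzs)) (ih (C.erase z).card ?_ _ rfl hE ?_)
      · rw [← hn]; exact Finset.card_erase_lt_of_mem hz
      · unfold sc at hs ⊢
        rw [Finset.filter_erase, Finset.erase_eq_of_notMem (by simp [hzs])]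
        exact hs
    · push Not at hns
      have hcs : ∀ D ⊆ C, sc ch D = D.card := by
        intro D hD
        unfold sc
        rw [Finset.filter_true_of_mem (fun z hz => hns z (hD hz))]
      rw [hcs C (fun _ h => h)] at hs
      rcases Nat.lt_or_ge C.card 2 with h | h
      · have : C = ∅ := Finset.card_eq_zero.1 (by omega)
        rw [this]; exact Hang.empty p
      · by_cases h3 : C.card = 3
        · obtain ⟨a, b, c, hab, hac, hbc, rfl⟩ := Finset.card_eq_three.1 h3
          exact hang_triple T (hC (by simp)) (hC (by simp)) (hC (by simp)) hab hac hbc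
            (hns a (by simp)) (hns b (by simp)) (hns c (by simp)) hQ
        · obtain ⟨D, hD, hDc⟩ := Finset.exists_subset_card_eq h
          have e : C = D ∪ (C \ D) := (Finset.union_sdiff_of_subset hD).symm
          have hc2 : (C \ D).card = C.card - 2 := by
            rw [Finset.card_sdiff_of_subset hD, hDc]
          have hE : C \ D ⊆ ch p := Finset.sdiff_subset.trans hC
          rw [e]
          refine Hang.union T (hD.trans hC) hE Finset.disjoint_sdiff ?_
            (ih (C \ D).card (by omega) _ rfl hE ?_)
          · obtain ⟨a, b, hab, rfl⟩ := Finset.card_eq_two.1 hDc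
            exact hang_pair T (hC (hD (by simp))) (hC (hD (by simp))) hab
              (hns a (hD (by simp))) (hns b (hD (by simp))) hQ
          · rw [hcs _ Finset.sdiff_subset]
            omega

end
end TP

namespace TP

def tw : PT := .cons .nil (.cons .nil .nil)

def gs : List PT := [pc 1, pc 2, tw]

def ext : List PT :=
  (List.range 4).map (fun k => .cons (pc k) .nil) ++
  (List.range 3).flatMap (fun i => (List.range 3).map fun j => .cons (pc i) (.cons (pc j) .nil))

def ext2 : List PT :=
  gs.map (fun g => .cons g .nil) ++ ext.map (fun e => .cons .nil (.cons e .nil)) ++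
  ext.map (fun e => .cons e .nil) ++
  gs.flatMap (fun g => (List.range 3).map fun j => .cons g (.cons (pc j) .nil))

def mainF : List PT :=
  (List.range 4).map (fun k => .cons (pc 1) (.cons (pc k) .nil)) ++
  ext.map (fun e => .cons .nil (.cons e .nil)) ++
  ext2.map (fun e => .cons e .nil) ++
  gs.flatMap (fun g => (List.range 3).map fun j => .cons g (.cons (pc j) .nil)) ++
  gs.flatMap (fun g => (List.range 3).flatMap fun j => (List.range 3).map fun k =>
    .cons g (.cons (pc j) (.cons (pc k) .nil)))

def mainT : List (List ℕ) :=
  [[2, 3, 1, 0],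
   [2, 3, 1, 4, 0],
   [2, 4, 0, 5, 1, 3],
   [2, 4, 0, 5, 1, 6, 3],
   [1, 2, 3, 0],
   [1, 2, 4, 0, 3],
   [1, 3, 4, 0, 5, 2],
   [1, 2, 4, 6, 0, 3, 5],
   [1, 2, 3, 4, 0],
   [1, 4, 5, 2, 0, 3],
   [1, 2, 3, 5, 6, 0, 4],
   [1, 3, 4, 0, 5, 2],
   [1, 2, 4, 5, 0, 6, 3],
   [1, 2, 4, 5, 0, 7, 3, 6],
   [1, 2, 5, 6, 0, 4, 3],
   [1, 2, 5, 6, 0, 4, 7, 3],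
   [1, 2, 5, 6, 0, 4, 8, 3, 7],
   [1, 3, 0, 2],
   [1, 3, 0, 4, 2],
   [1, 3, 0, 4, 2],
   [1, 4, 0, 2, 3],
   [1, 5, 3, 2, 0, 4],
   [1, 4, 0, 6, 2, 3, 5],
   [1, 4, 0, 6, 2, 3, 7, 5],
   [1, 4, 5, 0, 3, 2],
   [1, 4, 5, 0, 6, 2, 3],
   [1, 4, 0, 5, 2, 7, 3, 6],
   [1, 4, 0, 6, 2, 3, 5],
   [1, 4, 0, 7, 2, 3, 5, 6],
   [1, 4, 0, 7, 2, 3, 5, 8, 6],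
   [1, 4, 0, 6, 2, 7, 5, 3],
   [1, 4, 0, 6, 2, 7, 5, 8, 3],
   [1, 5, 0, 8, 6, 7, 4, 2, 9, 3],
   [1, 3, 0, 2],
   [1, 3, 0, 4, 2],
   [1, 3, 5, 0, 2, 4],
   [1, 3, 5, 0, 2, 6, 4],
   [1, 3, 0, 4, 2],
   [1, 4, 3, 5, 0, 2],
   [1, 3, 4, 0, 6, 2, 5],
   [1, 3, 5, 0, 2, 4],
   [1, 3, 6, 0, 2, 4, 5],
   [1, 3, 6, 0, 2, 4, 7, 5],
   [1, 3, 5, 0, 6, 4, 2],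
   [1, 3, 5, 0, 6, 4, 7, 2],
   [1, 4, 0, 6, 5, 2, 8, 3, 7],
   [1, 3, 4, 2, 0],
   [1, 3, 4, 0, 5, 2],
   [1, 3, 4, 0, 6, 2, 5],
   [1, 4, 5, 0, 3, 2],
   [1, 4, 5, 0, 3, 6, 2],
   [1, 4, 5, 0, 3, 7, 2, 6],
   [1, 3, 0, 2, 5, 4],
   [1, 3, 4, 0, 5, 6, 2],
   [1, 3, 4, 0, 5, 7, 2, 6],
   [2, 3, 1, 0],
   [2, 3, 1, 4, 0],
   [2, 4, 0, 5, 1, 3],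
   [2, 4, 3, 1, 0],
   [2, 4, 3, 0, 5, 1],
   [2, 4, 3, 0, 6, 1, 5],
   [2, 4, 3, 1, 0],
   [1, 4, 3, 2, 5, 0],
   [1, 4, 3, 2, 6, 0, 5],
   [2, 3, 1, 4, 0],
   [2, 4, 3, 0, 5, 1],
   [2, 4, 3, 0, 6, 1, 5],
   [2, 3, 5, 4, 1, 0],
   [2, 3, 5, 4, 1, 6, 0],
   [2, 3, 5, 4, 1, 7, 0, 6],
   [2, 3, 6, 5, 1, 4, 0],
   [2, 3, 6, 5, 1, 4, 7, 0],
   [2, 3, 6, 5, 1, 4, 8, 0, 7],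
   [1, 3, 0, 2, 5, 4],
   [1, 3, 0, 2, 5, 6, 4],
   [1, 3, 0, 2, 5, 7, 4, 6],
   [1, 3, 0, 2, 5, 6, 4],
   [1, 3, 0, 2, 5, 6, 7, 4],
   [1, 3, 0, 2, 5, 6, 8, 4, 7],
   [1, 3, 0, 2, 6, 7, 4, 5],
   [1, 3, 0, 2, 6, 7, 5, 8, 4],
   [2, 5, 3, 0, 6, 7, 4, 9, 1, 8],
   [2, 4, 1, 5, 0, 3],
   [1, 4, 3, 2, 5, 6, 0],
   [1, 6, 3, 2, 5, 4, 7, 0],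
   [1, 6, 3, 2, 5, 0, 4],
   [1, 5, 3, 2, 7, 0, 4, 6],
   [1, 5, 3, 2, 7, 0, 4, 8, 6],
   [1, 5, 3, 2, 7, 6, 0, 4],
   [1, 5, 3, 2, 6, 7, 4, 8, 0],
   [1, 5, 3, 2, 7, 6, 0, 9, 4, 8]]

theorem chk_main : ∀ i < mainF.length, CkP 0 (mainF.getD i .nil) (mainT.getD i []) := by
  decide +kernel

theorem good_main {F : PT} (h : F ∈ mainF) : ∃ t, CkP 0 F t := by
  obtain ⟨i, hi, rfl⟩ := List.getElem_of_mem h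
  have := chk_main i hi
  rw [List.getD_eq_getElem?_getD, List.getElem?_eq_getElem hi] at this
  exact ⟨_, this⟩

section
variable {V : Type*} {G : SimpleGraph V} {ch : V → Finset V} {d : V → ℕ}

theorem R_leaf {v : V} (h : ch v = ∅) : R ch .nil v ∅ := by
  classical
  change sc ch _ ≠ 1
  rw [h, Finset.empty_sdiff, sc_empty]; norm_num

open Classical in
theorem one_star {p c : V} {F : PT} (hc : c ∈ ch p) (hs : Star ch c) (h : R ch F c ∅)
    (hn : sc ch (ch p) ≠ 2) : R ch (.cons F .nil) p ∅ := by
  have hc' : c ∈ ch p \ ∅ := by simpa using hc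
  have e := sc_star hc' hs
  have e0 : ch p \ ∅ = ch p := Finset.sdiff_empty
  refine ⟨c, hc', h, ?_⟩
  change sc ch _ ≠ 1
  rw [e0] at e
  omega

open Classical in
theorem one_non {p c : V} {F : PT} (hc : c ∈ ch p) (hs : ¬ Star ch c) (h : R ch F c ∅)
    (hn : sc ch (ch p) ≠ 1) : R ch (.cons F .nil) p ∅ := by
  have hc' : c ∈ ch p \ ∅ := by simpa using hc
  have e := sc_nonstar (p := p) (E := ∅) hs
  have e0 : ch p \ ∅ = ch p := Finset.sdiff_empty
  refine ⟨c, hc', h, ?_⟩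
  change sc ch _ ≠ 1
  rw [e0] at e
  omega

open Classical in
theorem star_non {p c z : V} {F H : PT} (hc : c ∈ ch p) (hs : Star ch c) (h : R ch F c ∅)
    (hz : z ∈ ch p) (hzs : ¬ Star ch z) (hH : R ch H z ∅)
    (hn : sc ch (ch p) ≠ 2) : R ch (.cons F (.cons H .nil)) p ∅ := by
  have hc' : c ∈ ch p \ ∅ := by simpa using hc
  have e := sc_star hc' hs
  have e1 := sc_nonstar (p := p) (E := insert c ∅) hzs
  have e0 : ch p \ ∅ = ch p := Finset.sdiff_empty
  have hzc : z ≠ c := by rintro rfl; exact hzs hs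
  refine ⟨c, hc', h, z, by simp [hz, hzc], hH, ?_⟩
  change sc ch _ ≠ 1
  rw [e0] at e
  omega

open Classical in
theorem two_star {p c z : V} {F H : PT} (hc : c ∈ ch p) (hs : Star ch c) (h : R ch F c ∅)
    (hz : z ∈ ch p) (hzs : Star ch z) (hH : R ch H z ∅) (hzc : z ≠ c)
    (hn : sc ch (ch p) ≠ 3) : R ch (.cons F (.cons H .nil)) p ∅ := by
  have hc' : c ∈ ch p \ ∅ := by simpa using hc
  have hz' : z ∈ ch p \ insert c ∅ := by simp [hz, hzc]
  have e := sc_star hc' hs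
  have e1 := sc_star hz' hzs
  have e0 : ch p \ ∅ = ch p := Finset.sdiff_empty
  refine ⟨c, hc', h, z, hz', hH, ?_⟩
  change sc ch _ ≠ 1
  rw [e0] at e
  omega

open Classical in
theorem ex_second {p c : V} (hc : c ∈ ch p) (hs : Star ch c) (hn : 2 ≤ sc ch (ch p)) :
    ∃ z ∈ ch p, Star ch z ∧ z ≠ c := by
  have hc' : c ∈ ch p \ ∅ := by simpa using hc
  have e := sc_star hc' hs
  have e0 : ch p \ ∅ = ch p := Finset.sdiff_empty
  rw [e0] at e
  obtain ⟨z, hz, h⟩ := sc_ex (ch := ch) (C := ch p \ insert c ∅) (by omega)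
  simp only [Finset.mem_sdiff, Finset.mem_insert, Finset.notMem_empty, or_false] at hz
  exact ⟨z, hz.1, h, hz.2⟩

/-- any vertex -/
theorem chainA (z : V) : ∃ k < 4, R ch (pc k) z ∅ := by
  classical
  by_cases h : sc ch (ch z) = 1
  · obtain ⟨c, hc, hs⟩ := sc_ex (ch := ch) (C := ch z) (by omega)
    obtain ⟨i, hi, r⟩ := chainP c hs
    exact ⟨i + 1, by omega, one_star hc hs r (by omega)⟩
  · refine ⟨0, by norm_num, ?_⟩
    change sc ch _ ≠ 1
    rwa [Finset.sdiff_empty]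

theorem sc_singleton {c : V} (h : Star ch c) : sc ch {c} = 1 := by
  classical
  unfold sc
  rw [Finset.filter_true_of_mem (by simpa using h), Finset.card_singleton]

theorem st_leaf {y : V} (h : Star ch y) (hn : sc ch (ch y) ≠ 1) : ∀ e ∈ ch y, ch e = ∅ := by
  rcases h with h | ⟨c, hc, h⟩
  · exact h
  · rw [hc] at hn
    exact absurd (sc_singleton (Or.inl h)) hn

theorem sc_all {C : Finset V} (h : ∀ c ∈ C, Star ch c) : sc ch C = C.card := by
  classical
  unfold sc
  rw [Finset.filter_true_of_mem h]

theorem st_child {y e : V} (h : Star ch y) (he : e ∈ ch y) : Star ch e := by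
  rcases h with h | ⟨c, hc, h⟩
  · exact star_of_leaf (h e he)
  · rw [hc, Finset.mem_singleton] at he
    subst he
    exact Or.inl h

theorem Rg {y : V} (h : Star ch y) (hne : ch y ≠ ∅) : ∃ g ∈ gs, R ch g y ∅ := by
  classical
  have hcard := sc_all (fun e he => st_child h he)
  have hpos : sc ch (ch y) ≠ 0 := by
    rw [hcard]; exact fun h => hne (Finset.card_eq_zero.1 h)
  obtain ⟨e, he, hes⟩ := sc_ex hpos
  by_cases h1 : sc ch (ch y) = 1
  · obtain ⟨i, hi, r⟩ := chainP y h
    match i, hi, r with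
    | 0, _, r =>
      exfalso
      have r' : sc ch (ch y \ ∅) ≠ 1 := r
      rw [Finset.sdiff_empty] at r'
      exact r' h1
    | 1, _, r => exact ⟨pc 1, by decide, r⟩
    | 2, _, r => exact ⟨pc 2, by decide, r⟩
  · have hl := st_leaf h h1
    by_cases h2 : sc ch (ch y) = 2
    · obtain ⟨a, ha, has, hne⟩ := ex_second he hes (by omega)
      exact ⟨tw, by decide, two_star he hes (R_leaf (hl e he)) ha has (R_leaf (hl a ha)) hne
        (by omega)⟩
    · exact ⟨pc 1, by decide, one_star he hes (R_leaf (hl e he)) h2⟩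

theorem ns_no {z : V} (h : ¬ Star ch z) (h1 : sc ch (ch z) ≠ 1) (hn : ∀ w ∈ ch z, Star ch w) :
    2 ≤ sc ch (ch z) ∧ ∃ y ∈ ch z, ch y ≠ ∅ := by
  have h2 : ∃ y ∈ ch z, ch y ≠ ∅ := by
    by_contra h2
    push Not at h2
    exact h (Or.inl h2)
  refine ⟨?_, h2⟩
  obtain ⟨y, hy, _⟩ := h2
  rw [sc_all hn] at h1 ⊢
  have := Finset.card_pos.2 ⟨y, hy⟩
  omega

theorem nsI {x c : V} (h : ¬ Star ch x) (h1 : sc ch (ch x) = 1) (hc : c ∈ ch x)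
    (hl : ∀ e ∈ ch c, ch e = ∅) : ∃ z ∈ ch x, ¬ Star ch z := by
  by_contra hn
  push Not at hn
  rw [sc_all hn] at h1
  obtain ⟨a, ha⟩ := Finset.card_eq_one.1 h1
  rw [ha, Finset.mem_singleton] at hc
  subst hc
  exact h (Or.inr ⟨c, ha, hl⟩)

theorem mem_ext1 : ∀ k < 4, .cons (pc k) .nil ∈ ext := by decide
theorem mem_ext2 : ∀ i < 3, ∀ j < 3, .cons (pc i) (.cons (pc j) .nil) ∈ ext := by decide

theorem ex_ext {z : V} (h : ¬ Star ch z) : ∃ e ∈ ext, R ch e z ∅ := by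
  by_cases h1 : sc ch (ch z) = 1
  · obtain ⟨c, hc, hs⟩ := sc_ex (ch := ch) (C := ch z) (by omega)
    obtain ⟨i, hi, r⟩ := chainP c hs
    exact ⟨_, mem_ext1 i (by omega), one_star hc hs r (by omega)⟩
  · by_cases hn : ∀ w ∈ ch z, Star ch w
    · obtain ⟨h2, _⟩ := ns_no h h1 hn
      obtain ⟨c, hc, hs⟩ := sc_ex (ch := ch) (C := ch z) (by omega)
      obtain ⟨i, hi, r⟩ := chainP c hs
      by_cases h3 : sc ch (ch z) = 2
      · obtain ⟨a, ha, has, hne⟩ := ex_second hc hs h2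
        obtain ⟨j, hj, rj⟩ := chainP a has
        exact ⟨_, mem_ext2 i hi j hj, two_star hc hs r ha has rj hne (by omega)⟩
      · exact ⟨_, mem_ext1 i (by omega), one_star hc hs r h3⟩
    · push Not at hn
      obtain ⟨w, hw, hws⟩ := hn
      obtain ⟨k, hk, r⟩ := chainA (ch := ch) w
      exact ⟨_, mem_ext1 k hk, one_non hw hws r h1⟩

theorem mem_e1 : ∀ g ∈ gs, .cons g .nil ∈ ext2 := by decide
theorem mem_e2 : ∀ e ∈ ext, .cons .nil (.cons e .nil) ∈ ext2 := by decide
theorem mem_e3 : ∀ e ∈ ext, .cons e .nil ∈ ext2 := by decide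
theorem mem_e4 : ∀ g ∈ gs, ∀ j < 3, .cons g (.cons (pc j) .nil) ∈ ext2 := by decide

theorem ex_ext2 {z : V} (h : ¬ Star ch z) : ∃ e ∈ ext2, R ch e z ∅ := by
  by_cases h1 : sc ch (ch z) = 1
  · obtain ⟨c, hc, hs⟩ := sc_ex (ch := ch) (C := ch z) (by omega)
    by_cases hl : ch c = ∅
    · obtain ⟨w, hw, hws⟩ := nsI h h1 hc (by simp [hl])
      obtain ⟨e, he, r⟩ := ex_ext hws
      exact ⟨_, mem_e2 e he, star_non hc hs (R_leaf hl) hw hws r (by omega)⟩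
    · obtain ⟨g, hg, r⟩ := Rg hs hl
      exact ⟨_, mem_e1 g hg, one_star hc hs r (by omega)⟩
  · by_cases hn : ∀ w ∈ ch z, Star ch w
    · obtain ⟨h2, y, hy, hyl⟩ := ns_no h h1 hn
      obtain ⟨g, hg, r⟩ := Rg (hn y hy) hyl
      by_cases h3 : sc ch (ch z) = 2
      · obtain ⟨a, ha, has, hne⟩ := ex_second hy (hn y hy) h2
        obtain ⟨j, hj, rj⟩ := chainP a has
        exact ⟨_, mem_e4 g hg j hj, two_star hy (hn y hy) r ha has rj hne (by omega)⟩
      · exact ⟨_, mem_e1 g hg, one_star hy (hn y hy) r h3⟩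
    · push Not at hn
      obtain ⟨w, hw, hws⟩ := hn
      obtain ⟨e, he, r⟩ := ex_ext hws
      exact ⟨_, mem_e3 e he, one_non hw hws r h1⟩

theorem mem_m1 : ∀ k < 4, .cons (pc 1) (.cons (pc k) .nil) ∈ mainF := by decide +kernel
theorem mem_m2 : ∀ e ∈ ext, .cons .nil (.cons e .nil) ∈ mainF := by decide +kernel
theorem mem_m3 : ∀ e ∈ ext2, .cons e .nil ∈ mainF := by decide +kernel
theorem mem_m4 : ∀ g ∈ gs, ∀ j < 3, .cons g (.cons (pc j) .nil) ∈ mainF := by decide +kernel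
theorem mem_m5 : ∀ g ∈ gs, ∀ j < 3, ∀ k < 3,
    .cons g (.cons (pc j) (.cons (pc k) .nil)) ∈ mainF := by decide +kernel

theorem ex_main {x : V} (h : ¬ Star ch x) : ∃ F ∈ mainF, R ch F x ∅ := by
  classical
  by_cases h1 : sc ch (ch x) = 1
  · obtain ⟨c, hc, hs⟩ := sc_ex (ch := ch) (C := ch x) (by omega)
    by_cases h2 : sc ch (ch c) = 1
    · obtain ⟨c', hc', hs'⟩ := sc_ex (ch := ch) (C := ch c) (by omega)
      by_cases hl : ch c' = ∅
      · have hlc : ∀ e ∈ ch c, ch e = ∅ := by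
          rcases hs with hs | ⟨b, hb, hs⟩
          · exact hs
          · intro e he
            rw [hb, Finset.mem_singleton] at he hc'
            rw [he, ← hc', hl]
        obtain ⟨z, hz, hzs⟩ := nsI h h1 hc hlc
        obtain ⟨k, hk, r⟩ := chainA (ch := ch) z
        exact ⟨_, mem_m1 k hk, star_non hc hs (one_star hc' hs' (R_leaf hl) (by omega)) hz hzs r
          (by omega)⟩
      · obtain ⟨g, hg, r⟩ := Rg hs' hl
        exact ⟨_, mem_m3 _ (mem_e1 g hg), one_star hc hs (one_star hc' hs' r (by omega))
          (by omega)⟩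
    · obtain ⟨z, hz, hzs⟩ := nsI h h1 hc (st_leaf hs h2)
      obtain ⟨e, he, r⟩ := ex_ext hzs
      refine ⟨_, mem_m2 e he, star_non hc hs ?_ hz hzs r (by omega)⟩
      change sc ch _ ≠ 1
      rwa [Finset.sdiff_empty]
  · by_cases hn : ∀ w ∈ ch x, Star ch w
    · obtain ⟨h2, y, hy, hyl⟩ := ns_no h h1 hn
      obtain ⟨g, hg, r⟩ := Rg (hn y hy) hyl
      obtain ⟨a, ha, has, hne⟩ := ex_second hy (hn y hy) h2
      obtain ⟨j, hj, rj⟩ := chainP a has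
      by_cases h3 : sc ch (ch x) = 3
      · have hy' : y ∈ ch x \ ∅ := by simpa using hy
        have ha' : a ∈ ch x \ insert y ∅ := by simp [ha, hne]
        have e1 := sc_star hy' (hn y hy)
        have e2 := sc_star ha' has
        have e0 : ch x \ ∅ = ch x := Finset.sdiff_empty
        rw [e0] at e1
        obtain ⟨b, hb, hbs⟩ := sc_ex (ch := ch) (C := ch x \ insert a (insert y ∅)) (by omega)
        obtain ⟨k, hk, rk⟩ := chainP b hbs
        have e3 := sc_star hb hbs
        refine ⟨_, mem_m5 g hg j hj k hk, y, hy', r, a, ha', rj, b, hb, rk, ?_⟩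
        change sc ch _ ≠ 1
        omega
      · exact ⟨_, mem_m4 g hg j hj, two_star hy (hn y hy) r ha has rj hne h3⟩
    · push Not at hn
      obtain ⟨z, hz, hzs⟩ := hn
      obtain ⟨e, he, r⟩ := ex_ext2 hzs
      exact ⟨_, mem_m3 e he, one_non hz hzs r h1⟩

theorem main_ind [Fintype V] (T : RT G ch d) : ∀ n v, (∀ w, d w ≤ d v + n) →
    Q G ch v ∧ (¬ Star ch v → Well G ch v) := by
  intro n
  induction n with
  | zero =>
    intro v hv
    have h0 : ch v = ∅ := by
      rw [Finset.eq_empty_iff_forall_notMem]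
      intro w hw
      have := T.dep _ _ hw
      have := hv w
      omega
    refine ⟨?_, fun h => absurd (star_of_leaf h0) h⟩
    intro C hC _
    rw [h0, Finset.subset_empty] at hC
    rw [hC]; exact Hang.empty v
  | succ n ih =>
    intro v hv
    have hQ' : ∀ w, Desc ch v w → d v < d w → Q G ch w := by
      intro w _ h
      exact (ih w (fun u => by have := hv u; omega)).1
    have hQ : Q G ch v := by
      refine Q_step T v ?_ hQ'
      intro z hz hzs
      have := T.dep _ _ hz
      exact (ih z (fun u => by have := hv u; omega)).2 hzs
    refine ⟨hQ, ?_⟩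
    intro hs
    obtain ⟨F, hF, r⟩ := ex_main hs
    obtain ⟨t, ht⟩ := good_main hF
    refine core_true T F t ht v r ?_
    intro w hw
    cases hw with
    | refl => exact hQ
    | tail h1 h2 =>
      refine hQ' w (Desc.step h1 h2) ?_
      have := T.desc_dep h1
      have := T.dep _ _ h2
      omega

end

end TP

/-- every non-star tree T and vertex x have a (T,x)-well 2-placement. -/
theorem stmt13 {V : Type*} [Fintype V] [DecidableEq V] (G : SimpleGraph V)
    (hG : IsNonStarTree G) (x : V) :
    ∃ σ : Equiv.Perm V,
      (∀ v, σ v ≠ v) ∧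
      (∀ u v, G.Adj u v → ¬ G.Adj (σ u) (σ v)) ∧
      (∀ u v, G.Adj u v → G.dist (σ u) (σ v) ≤ 6) ∧
      G.dist x (σ x) ≤ 2 ∧
      (∀ y, G.Adj x y → G.dist y (σ y) ≤ 3) ∧
      (∀ y, (∃! w, G.Adj y w) → G.dist y (σ y) ≤ 4) ∧
      (∀ v, (σ.cycleOf v).support.card ≤ 5) := by
  obtain ⟨ch, d, T, hx⟩ := TP.exists_RT G hG.1 x
  have hns : ¬ TP.Star ch x := by
    have key : ∀ c, (∀ v, v ∈ ch c → ch v = ∅) → (∀ w, w = x ∨ w = c ∨ w ∈ ch c) →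
        (c = x ∨ c ∈ ch x) → False := by
      intro c _ h2 h3
      refine hG.2 ⟨c, fun w hw => ?_⟩
      rcases h2 w with rfl | h | h
      · rcases h3 with rfl | h3
        · exact absurd rfl hw
        · exact (T.adj _ _).2 (Or.inr h3)
      · exact absurd h hw
      · exact (T.adj _ _).2 (Or.inl h)
    rintro (h | ⟨c, hc, h⟩)
    · refine key x h (fun w => ?_) (Or.inl rfl)
      have hw := hx w
      induction hw with
      | refl => exact Or.inl rfl
      | tail _ h2 ih =>
        rcases ih with rfl | rfl | ih
        · exact Or.inr (Or.inr h2)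
        · exact Or.inr (Or.inr h2)
        · rw [h _ ih] at h2; simp at h2
    · refine key c h (fun w => ?_) (Or.inr (by simp [hc]))
      have hw := hx w
      induction hw with
      | refl => exact Or.inl rfl
      | tail _ h2 ih =>
        rcases ih with rfl | rfl | ih
        · rw [hc, Finset.mem_singleton] at h2; exact Or.inr (Or.inl h2)
        · exact Or.inr (Or.inr h2)
        · rw [h _ ih] at h2; simp at h2
  obtain ⟨σ, g, h1, h2⟩ := (TP.main_ind T (Finset.univ.sup d) x
    (fun w => (Finset.le_sup (Finset.mem_univ w)).trans (Nat.le_add_left _ _))).2 hns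
  have hedge : ∀ u v, G.Adj u v → ¬ G.Adj (σ u) (σ v) ∧ G.dist (σ u) (σ v) ≤ 6 := by
    intro u v h
    rcases (T.adj _ _).1 h with h | h
    · exact g.edge u (hx u) v h (hx v)
    · have := g.edge v (hx v) u h (hx u)
      rw [dist_comm, G.adj_comm]
      exact this
  refine ⟨σ, fun v => (g.supp v).2 (hx v), fun u v h => (hedge u v h).1,
    fun u v h => (hedge u v h).2, h1, ?_, ?_, ?_⟩
  · intro y hy
    rcases (T.adj _ _).1 hy with h | h
    · exact h2 y h
    · have := T.desc_dep (hx y)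
      have := T.dep _ _ h
      omega
  · rintro y ⟨w, hw, hu⟩
    by_cases hyx : y = x
    · rw [hyx]; omega
    · refine g.leaf y (hx y) ?_
      have hxy := hx y
      cases hxy with
      | refl => exact absurd rfl hyx
      | @tail b _ _ h4 =>
        rw [Finset.eq_empty_iff_forall_notMem]
        intro e he
        have e1 := hu b ((T.adj _ _).2 (Or.inr h4))
        have e2 := hu e ((T.adj _ _).2 (Or.inl he))
        have := T.dep _ _ h4
        have := T.dep _ _ he
        rw [e2, ← e1] at this
        omega
  · intro v
    obtain ⟨k, hk1, hk5, hk⟩ := g.cyc v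
    have hc : (σ.cycleOf v).IsCycle :=
      Equiv.Perm.isCycle_cycleOf σ ((g.supp v).2 (hx v))
    rw [← hc.orderOf]
    refine le_trans (Nat.le_of_dvd hk1 ?_) hk5
    rw [orderOf_dvd_iff_pow_eq_one, hc.pow_eq_one_iff]
    refine ⟨v, ?_, ?_⟩
    · rw [Equiv.Perm.cycleOf_apply_self]; exact (g.supp v).2 (hx v)
    · rw [Equiv.Perm.cycleOf_pow_apply_self]; exact hk
end
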